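/- arXiv:1405.1575 — 2 statements merged into one kernel-verified Lean document; each statement's English description precedes it below -/
import Mathlib

section
/- Let V be a primitive linear subspace of J3(F2) of dimension 4. Then V is equivalent to one and only one of the following four spaces of 3×3 matrices over F2, each parametrized by (a,b,c,d) ∈ F2^4: N1 = [[a,c,0],[0,a+b,d],[0,0,b]], N2 = [[a,c,d],[0,a+b,0],[0,0,b]], N3 = [[a,0,c],[0,a+b,d],[0,0,b]], N4 = [[a,c,d],[0,a+b,c],[0,0,b]]. -/
/-!
A four-dimensional subspace of `J3` is a hyperplane `α a + β b + γ c + δ d + ε e = 0` in the space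
of matrices `!![a, c, e; 0, a + b, d; 0, 0, b]`. If `γ = δ = ε = 0`, it is one of `a = 0` (a zero
column), `b = 0` (a zero row) and `a + b = 0` (upper rank `2`, but rank at most `1` without the last
column), and it is not semi-primitive. Otherwise multiplication by unitriangular matrices on both
sides, which adds to `c`, `d`, `e` multiples of the other entries, brings the equation to `e = 0`,
`d = 0`, `c = 0` or `c + d = 0`.

The resulting four spaces are told apart by the number of vectors `x` for which
`V x = {M x | M ∈ V}` is a plane, an invariant of equivalence whose values are `3`, `4`, `1`, `2`.
-/

open Matrix

/-- Two linear subspaces of `n × p` matrices over `K` are *equivalent* when one is obtained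
from the other by multiplying on the left and on the right by fixed invertible matrices. -/
def MatEquiv (K : Type*) [Field K] {n p : ℕ}
    (V₁ V₂ : Submodule K (Matrix (Fin n) (Fin p) K)) : Prop :=
  ∃ (P : Matrix (Fin n) (Fin n) K) (Q : Matrix (Fin p) (Fin p) K),
    IsUnit P ∧ IsUnit Q ∧
      (V₂ : Set (Matrix (Fin n) (Fin p) K)) =
        (fun M => P * M * Q) '' (V₁ : Set (Matrix (Fin n) (Fin p) K))

/-- A linear subspace of matrices is *reduced* when no nonzero vector is annihilated by every
matrix of the space, and the column spaces of the matrices of the space together span the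
whole target space. -/
def Reduced (K : Type*) [Field K] {n p : ℕ}
    (V : Submodule K (Matrix (Fin n) (Fin p) K)) : Prop :=
  (∀ x : Fin p → K, (∀ M ∈ V, M.mulVec x = 0) → x = 0) ∧
  Submodule.span K {y : Fin n → K | ∃ M ∈ V, ∃ x : Fin p → K, M.mulVec x = y} = ⊤

/-- The *upper rank* of a linear subspace of matrices: the maximal rank of a matrix in it. -/
noncomputable def urk {K : Type*} [Field K] {n p : ℕ}
    (V : Submodule K (Matrix (Fin n) (Fin p) K)) : ℕ :=
  sSup (Matrix.rank '' (V : Set (Matrix (Fin n) (Fin p) K)))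

/-- The matrix obtained by deleting the last column. -/
def dropCol {K : Type*} [Field K] {n p : ℕ} (M : Matrix (Fin n) (Fin p) K) :
    Matrix (Fin n) (Fin (p - 1)) K :=
  M.submatrix id (Fin.castLE (Nat.sub_le p 1))

/-- The matrix obtained by deleting the last row. -/
def dropRow {K : Type*} [Field K] {n p : ℕ} (M : Matrix (Fin n) (Fin p) K) :
    Matrix (Fin (n - 1)) (Fin p) K :=
  M.submatrix (Fin.castLE (Nat.sub_le n 1)) id

/-- A linear subspace of matrices (of upper rank `r = urk V`) is *semi-primitive* when it is
reduced and it is not equivalent to a subspace `T` such that the space obtained by deleting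
the last column of each matrix of `T` has upper rank at most `r - 1`. -/
def SemiPrimitive (K : Type*) [Field K] {n p : ℕ}
    (V : Submodule K (Matrix (Fin n) (Fin p) K)) : Prop :=
  Reduced K V ∧
    ¬ ∃ T : Submodule K (Matrix (Fin n) (Fin p) K),
        MatEquiv K V T ∧ ∀ M ∈ T, (dropCol M).rank ≤ urk V - 1

/-- A linear subspace of matrices (of upper rank `r = urk V`) is *primitive* when it is
semi-primitive and it is not equivalent to a subspace `T` such that the space obtained by
deleting the last row of each matrix of `T` has upper rank at most `r - 1`. -/
def Primitive (K : Type*) [Field K] {n p : ℕ}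
    (V : Submodule K (Matrix (Fin n) (Fin p) K)) : Prop :=
  SemiPrimitive K V ∧
    ¬ ∃ T : Submodule K (Matrix (Fin n) (Fin p) K),
        MatEquiv K V T ∧ ∀ M ∈ T, (dropRow M).rank ≤ urk V - 1

/-- `J3(F2)`: the space of upper-triangular `3 × 3` matrices over `F2` with trace zero. -/
def J3 : Submodule (ZMod 2) (Matrix (Fin 3) (Fin 3) (ZMod 2)) where
  carrier := {M | M.trace = 0 ∧ ∀ i j : Fin 3, j < i → M i j = 0}
  add_mem' := by
    rintro M N ⟨hM1, hM2⟩ ⟨hN1, hN2⟩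
    refine ⟨by simp [Matrix.trace_add, hM1, hN1], ?_⟩
    intro i j h
    simp [Matrix.add_apply, hM2 i j h, hN2 i j h]
  zero_mem' := by
    refine ⟨by simp, ?_⟩
    intro i j h
    simp
  smul_mem' := by
    rintro c M ⟨hM1, hM2⟩
    refine ⟨by simp [Matrix.trace_smul, hM1], ?_⟩
    intro i j h
    simp [Matrix.smul_apply, hM2 i j h]

/-- The space of matrices `!![a, c, 0; 0, a + b, d; 0, 0, b]`. -/
def SpaceN1 : Submodule (ZMod 2) (Matrix (Fin 3) (Fin 3) (ZMod 2)) where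
  carrier := {M | ∃ a b c d : ZMod 2, M = !![a, c, 0; 0, a + b, d; 0, 0, b]}
  add_mem' := by
    rintro M N ⟨a, b, c, d, rfl⟩ ⟨a', b', c', d', rfl⟩
    exact ⟨a + a', b + b', c + c', d + d', by revert a b c d a' b' c' d'; decide⟩
  zero_mem' := ⟨0, 0, 0, 0, by decide⟩
  smul_mem' := by
    rintro k M ⟨a, b, c, d, rfl⟩
    exact ⟨k * a, k * b, k * c, k * d, by revert k a b c d; decide⟩

/-- The space of matrices `!![a, c, d; 0, a + b, 0; 0, 0, b]`. -/
def SpaceN2 : Submodule (ZMod 2) (Matrix (Fin 3) (Fin 3) (ZMod 2)) where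
  carrier := {M | ∃ a b c d : ZMod 2, M = !![a, c, d; 0, a + b, 0; 0, 0, b]}
  add_mem' := by
    rintro M N ⟨a, b, c, d, rfl⟩ ⟨a', b', c', d', rfl⟩
    exact ⟨a + a', b + b', c + c', d + d', by revert a b c d a' b' c' d'; decide⟩
  zero_mem' := ⟨0, 0, 0, 0, by decide⟩
  smul_mem' := by
    rintro k M ⟨a, b, c, d, rfl⟩
    exact ⟨k * a, k * b, k * c, k * d, by revert k a b c d; decide⟩

/-- The space of matrices `!![a, 0, c; 0, a + b, d; 0, 0, b]`. -/
def SpaceN3 : Submodule (ZMod 2) (Matrix (Fin 3) (Fin 3) (ZMod 2)) where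
  carrier := {M | ∃ a b c d : ZMod 2, M = !![a, 0, c; 0, a + b, d; 0, 0, b]}
  add_mem' := by
    rintro M N ⟨a, b, c, d, rfl⟩ ⟨a', b', c', d', rfl⟩
    exact ⟨a + a', b + b', c + c', d + d', by revert a b c d a' b' c' d'; decide⟩
  zero_mem' := ⟨0, 0, 0, 0, by decide⟩
  smul_mem' := by
    rintro k M ⟨a, b, c, d, rfl⟩
    exact ⟨k * a, k * b, k * c, k * d, by revert k a b c d; decide⟩

/-- The space of matrices `!![a, c, d; 0, a + b, c; 0, 0, b]`. -/
def SpaceN4 : Submodule (ZMod 2) (Matrix (Fin 3) (Fin 3) (ZMod 2)) where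
  carrier := {M | ∃ a b c d : ZMod 2, M = !![a, c, d; 0, a + b, c; 0, 0, b]}
  add_mem' := by
    rintro M N ⟨a, b, c, d, rfl⟩ ⟨a', b', c', d', rfl⟩
    exact ⟨a + a', b + b', c + c', d + d', by revert a b c d a' b' c' d'; decide⟩
  zero_mem' := ⟨0, 0, 0, 0, by decide⟩
  smul_mem' := by
    rintro k M ⟨a, b, c, d, rfl⟩
    exact ⟨k * a, k * b, k * c, k * d, by revert k a b c d; decide⟩

/-- Exactly one of four conditions holds. -/
def ExactlyOne4 (c₁ c₂ c₃ c₄ : Prop) : Prop :=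
  (c₁ ∧ ¬c₂ ∧ ¬c₃ ∧ ¬c₄) ∨ (¬c₁ ∧ c₂ ∧ ¬c₃ ∧ ¬c₄) ∨
  (¬c₁ ∧ ¬c₂ ∧ c₃ ∧ ¬c₄) ∨ (¬c₁ ∧ ¬c₂ ∧ ¬c₃ ∧ c₄)

section Equivalence

variable {K : Type*} [Field K] {n p : ℕ} {V W : Submodule K (Matrix (Fin n) (Fin p) K)}

lemma MatEquiv.refl (V : Submodule K (Matrix (Fin n) (Fin p) K)) : MatEquiv K V V :=
  ⟨1, 1, isUnit_one, isUnit_one, by simp⟩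

lemma mul_mul_injective {P : Matrix (Fin n) (Fin n) K} {Q : Matrix (Fin p) (Fin p) K}
    (hP : IsUnit P) (hQ : IsUnit Q) :
    Function.Injective fun M : Matrix (Fin n) (Fin p) K => P * M * Q := by
  let := hP.invertible
  let := hQ.invertible
  exact (mul_left_injective_of_invertible Q).comp (mul_right_injective_of_invertible P)

lemma MatEquiv.of_mul_mul_mem {P : Matrix (Fin n) (Fin n) K} {Q : Matrix (Fin p) (Fin p) K}
    (hP : IsUnit P) (hQ : IsUnit Q) (hVW : ∀ M ∈ V, P * M * Q ∈ W)
    (hfinrank : Module.finrank K W ≤ Module.finrank K V) : MatEquiv K V W := by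
  let L : Matrix (Fin n) (Fin p) K →ₗ[K] Matrix (Fin n) (Fin p) K :=
    mulRightLinearMap (Fin n) K Q ∘ₗ mulLeftLinearMap (Fin p) K P
  have hL : Function.Injective L := mul_mul_injective hP hQ
  have hle : V.map L ≤ W := Submodule.map_le_iff_le_comap.2 hVW
  have heq : V.map L = W := Submodule.eq_of_le_of_finrank_le hle <| hfinrank.trans_eq
    (Submodule.equivMapOfInjective L hL V).finrank_eq
  exact ⟨P, Q, hP, hQ, by rw [← heq]; rfl⟩

end Equivalence

section EvalSubspace

variable {K : Type*} [Field K] {n p : ℕ} {V W : Submodule K (Matrix (Fin n) (Fin p) K)}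

/-- The subspace `V x = {M x | M ∈ V}` of `K ^ n`. -/
def evalSubspace (V : Submodule K (Matrix (Fin n) (Fin p) K)) (x : Fin p → K) :
    Submodule K (Fin n → K) :=
  V.map ((mulVecBilin K K).flip x)

/-- The number of vectors `x` for which `V x` has dimension `k`, used to tell apart inequivalent
spaces of matrices. It is finite only over a finite field, and `0` is the junk value otherwise. -/
noncomputable def evalRankCount (V : Submodule K (Matrix (Fin n) (Fin p) K)) (k : ℕ) : ℕ :=
  {x : Fin p → K | Module.finrank K (evalSubspace V x) = k}.ncard

lemma MatEquiv.exists_finrank_evalSubspace_eq (h : MatEquiv K V W) :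
    ∃ Q : Matrix (Fin p) (Fin p) K, IsUnit Q ∧ ∀ x,
      Module.finrank K (evalSubspace W x) = Module.finrank K (evalSubspace V (Q *ᵥ x)) := by
  obtain ⟨P, Q, hP, hQ, h⟩ := h
  refine ⟨Q, hQ, fun x => ?_⟩
  have hmap : evalSubspace W x = (evalSubspace V (Q *ᵥ x)).map P.mulVecLin := by
    apply SetLike.coe_injective
    simp only [evalSubspace, Submodule.map_coe, h, Set.image_image]
    simp [Matrix.mul_assoc]
  rw [hmap]
  exact (Submodule.equivMapOfInjective _ (mulVec_injective_of_isUnit hP) _).finrank_eq.symm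

lemma MatEquiv.evalRankCount_eq (h : MatEquiv K V W) (k : ℕ) :
    evalRankCount V k = evalRankCount W k := by
  obtain ⟨Q, hQ, hfinrank⟩ := h.exists_finrank_evalSubspace_eq
  have hsurj : Function.Surjective Q.mulVec := mulVec_surjective_iff_isUnit.2 hQ
  simp only [evalRankCount, hfinrank]
  exact (Set.ncard_preimage_of_injective_subset_range (mulVec_injective_of_isUnit hQ)
    (by simp [hsurj.range_eq])).symm

lemma evalRankCount_eq_card [Fintype K] [DecidableEq K] {ι : Type*} [Fintype ι]
    {N : ι → Matrix (Fin n) (Fin p) K} (hV : (V : Set (Matrix (Fin n) (Fin p) K)) = Set.range N)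
    (k : ℕ) :
    evalRankCount V k =
      (Finset.univ.filter fun x : Fin p → K =>
        (Finset.univ.image fun i => N i *ᵥ x).card = Fintype.card K ^ k).card := by
  have hcard (x : Fin p → K) : (Finset.univ.image fun i => N i *ᵥ x).card =
      Fintype.card K ^ Module.finrank K (evalSubspace V x) := by
    have hcoe : (evalSubspace V x : Set (Fin n → K)) =
        (Finset.univ.image fun i => N i *ᵥ x : Finset (Fin n → K)) := by
      ext y
      simp [evalSubspace, hV]
    rw [← Set.ncard_coe_finset, ← hcoe, ← Nat.card_eq_fintype_card,
      ← Module.natCard_eq_pow_finrank]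
    rfl
  have hinj := Nat.pow_right_injective (Fintype.one_lt_card (α := K))
  simp only [evalRankCount, hcard, hinj.eq_iff]
  rw [← Set.ncard_coe_finset]
  simp

end EvalSubspace

section Primitivity

variable {K : Type*} [Field K] {n p : ℕ} {V : Submodule K (Matrix (Fin n) (Fin p) K)}

lemma rank_le_urk {M : Matrix (Fin n) (Fin p) K} (hM : M ∈ V) : M.rank ≤ urk V := by
  refine le_csSup ⟨p, ?_⟩ ⟨M, hM, rfl⟩
  rintro _ ⟨N, -, rfl⟩
  exact N.rank_le_width

lemma not_reduced_of_col_eq_zero {j : Fin p} (h : ∀ M ∈ V, M.col j = 0) : ¬ Reduced K V := by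
  intro hV
  have hsingle : Pi.single j (1 : K) = 0 := hV.1 _ fun M hM => by simpa using h M hM
  simpa using congrFun hsingle j

lemma not_reduced_of_row_eq_zero {i : Fin n} (h : ∀ M ∈ V, M.row i = 0) : ¬ Reduced K V := by
  intro hV
  have hle : (⊤ : Submodule K (Fin n → K)) ≤ LinearMap.ker (LinearMap.proj i) := by
    rw [← hV.2, Submodule.span_le]
    rintro _ ⟨M, hM, x, rfl⟩
    have hrow : M i = 0 := h M hM
    simp [mulVec, hrow]
  simpa using hle (Submodule.mem_top (x := Pi.single i 1))

lemma not_semiPrimitive_of_rank_dropCol_lt {N : Matrix (Fin n) (Fin p) K} (hN : N ∈ V)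
    (h : ∀ M ∈ V, (dropCol M).rank < N.rank) : ¬ SemiPrimitive K V := fun hV =>
  hV.2 ⟨V, .refl V, fun M hM => Nat.le_sub_one_of_lt ((h M hM).trans_le (rank_le_urk hN))⟩

end Primitivity

section TriHyperplane

variable {K : Type*} [Field K]

/-- The linear parametrization of the matrices `!![a, c, e; 0, a + b, d; 0, 0, b]` by the vectors
`![a, b, c, d, e]`. Over `ZMod 2`, its range is `J3`. -/
def triMatrix : (Fin 5 → K) →ₗ[K] Matrix (Fin 3) (Fin 3) K where
  toFun v := !![v 0, v 2, v 4; 0, v 0 + v 1, v 3; 0, 0, v 1]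
  map_add' v w := by
    ext i j
    fin_cases i <;> fin_cases j <;> simp [add_add_add_comm]
  map_smul' k v := by
    ext i j
    fin_cases i <;> fin_cases j <;> simp [mul_add]

lemma triMatrix_apply (v : Fin 5 → K) :
    triMatrix v = !![v 0, v 2, v 4; 0, v 0 + v 1, v 3; 0, 0, v 1] := rfl

lemma triMatrix_injective : Function.Injective (triMatrix (K := K)) := by
  intro v w h
  have hentry (i j : Fin 3) : triMatrix v i j = triMatrix w i j := by rw [h]
  ext i
  fin_cases i
  exacts [hentry 0 0, hentry 2 2, hentry 0 1, hentry 1 2, hentry 0 2]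

/-- The space of matrices `!![a, c, e; 0, a + b, d; 0, 0, b]` such that
`f 0 * a + f 1 * b + f 2 * c + f 3 * d + f 4 * e = 0`. -/
def triHyperplane (f : Fin 5 → K) : Submodule K (Matrix (Fin 3) (Fin 3) K) :=
  (LinearMap.ker (dotProductBilin K K f)).map triMatrix

lemma mem_triHyperplane {α β γ δ ε : K} {M : Matrix (Fin 3) (Fin 3) K} :
    M ∈ triHyperplane ![α, β, γ, δ, ε] ↔ ∃ a b c d e,
      α * a + β * b + γ * c + δ * d + ε * e = 0 ∧ M = !![a, c, e; 0, a + b, d; 0, 0, b] := by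
  constructor
  · rintro ⟨v, hv, rfl⟩
    exact ⟨_, _, _, _, _, by simpa [dotProduct, Fin.sum_univ_five] using hv, rfl⟩
  · rintro ⟨a, b, c, d, e, h, rfl⟩
    exact ⟨![a, b, c, d, e], by simpa [dotProduct, Fin.sum_univ_five] using h, rfl⟩

lemma dotProductBilin_ne_zero {n : ℕ} {f : Fin n → K} (hf : f ≠ 0) :
    dotProductBilin K K f ≠ 0 :=
  fun h => hf (dotProduct_eq_zero f fun v => LinearMap.congr_fun h v)

lemma exists_eq_ker_dotProductBilin {n : ℕ} {W : Submodule K (Fin n → K)}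
    (hW : Module.finrank K W + 1 = n) :
    ∃ f : Fin n → K, f ≠ 0 ∧ W = LinearMap.ker (dotProductBilin K K f) := by
  have hlt : W < ⊤ := Submodule.lt_top_of_finrank_lt_finrank (by simp; omega)
  obtain ⟨φ, hφ, hle⟩ := W.exists_le_ker_of_lt_top hlt
  have hker := Module.Dual.finrank_ker_add_one_of_ne_zero hφ
  rw [Module.finrank_fin_fun] at hker
  have hrepr : φ = dotProductBilin K K fun i => φ (Pi.single i 1) := by
    ext i
    simp
  refine ⟨_, fun h => hφ ?_, hrepr ▸ Submodule.eq_of_le_of_finrank_le hle (by omega)⟩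
  rw [hrepr, h, map_zero]

lemma finrank_triHyperplane {f : Fin 5 → K} (hf : f ≠ 0) :
    Module.finrank K (triHyperplane f) = 4 := by
  have hker := Module.Dual.finrank_ker_add_one_of_ne_zero (dotProductBilin_ne_zero hf)
  have hmap := (Submodule.equivMapOfInjective triMatrix triMatrix_injective
    (LinearMap.ker (dotProductBilin K K f))).finrank_eq
  rw [Module.finrank_fin_fun] at hker
  rw [triHyperplane, ← hmap]
  omega

lemma exists_eq_triHyperplane {V : Submodule K (Matrix (Fin 3) (Fin 3) K)}
    (hV : V ≤ LinearMap.range triMatrix) (hdim : Module.finrank K V = 4) :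
    ∃ f ≠ 0, V = triHyperplane f := by
  have hmap : (V.comap triMatrix).map triMatrix = V := Submodule.map_comap_eq_of_le hV
  have hfinrank : Module.finrank K (V.comap triMatrix) = 4 := by
    rw [(Submodule.equivMapOfInjective triMatrix triMatrix_injective _).finrank_eq, hmap, hdim]
  obtain ⟨f, hf, hker⟩ := exists_eq_ker_dotProductBilin (by rw [hfinrank])
  exact ⟨f, hf, by rw [triHyperplane, ← hker, hmap]⟩

lemma isUnit_unitriangular (x y z : K) : IsUnit !![1, x, z; 0, 1, y; 0, 0, 1] := by
  rw [isUnit_iff_isUnit_det]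
  simp [det_fin_three]

lemma unitriangular_mul_mul_unitriangular (p q r s t u a b c d e : K) :
    !![1, p, t; 0, 1, r; 0, 0, 1] * !![a, c, e; 0, a + b, d; 0, 0, b] *
        !![1, u, s; 0, 1, q; 0, 0, 1] =
      !![a, c + p * (a + b) + u * a,
          e + s * a + q * (c + p * (a + b)) + p * d + t * b;
        0, a + b, d + q * (a + b) + r * b;
        0, 0, b] := by
  ext i j
  fin_cases i <;> fin_cases j <;> simp [mul_apply, Fin.sum_univ_three] <;> ring

lemma matEquiv_triHyperplane {α β γ δ ε α' β' γ' δ' ε' : K}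
    (hne : ![α, β, γ, δ, ε] ≠ 0) (hne' : ![α', β', γ', δ', ε'] ≠ 0) (p q r s t u : K)
    (h : ∀ a b c d e, α * a + β * b + γ * c + δ * d + ε * e = 0 →
      α' * a + β' * b + γ' * (c + p * (a + b) + u * a) + δ' * (d + q * (a + b) + r * b) +
        ε' * (e + s * a + q * (c + p * (a + b)) + p * d + t * b) = 0) :
    MatEquiv K (triHyperplane ![α, β, γ, δ, ε]) (triHyperplane ![α', β', γ', δ', ε']) := by
  refine .of_mul_mul_mem (isUnit_unitriangular p r t) (isUnit_unitriangular u q s) ?_ ?_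
  · intro M hM
    obtain ⟨a, b, c, d, e, habcde, rfl⟩ := mem_triHyperplane.1 hM
    exact mem_triHyperplane.2 ⟨_, _, _, _, _, h a b c d e habcde,
      unitriangular_mul_mul_unitriangular ..⟩
  · rw [finrank_triHyperplane hne, finrank_triHyperplane hne']

lemma matEquiv_triHyperplane_upperRight (α β γ δ : K) :
    MatEquiv K (triHyperplane ![α, β, γ, δ, 1]) (triHyperplane ![0, 0, 0, 0, 1]) :=
  matEquiv_triHyperplane (by simp) (by simp) δ γ 0 (α - γ * δ) (β - γ * δ) 0
    fun _ _ _ _ _ h => by linear_combination h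

lemma matEquiv_triHyperplane_right (α β : K) :
    MatEquiv K (triHyperplane ![α, β, 0, 1, 0]) (triHyperplane ![0, 0, 0, 1, 0]) :=
  matEquiv_triHyperplane (by simp) (by simp) 0 α (β - α) 0 0 0
    fun _ _ _ _ _ h => by linear_combination h

lemma matEquiv_triHyperplane_upper (α β δ : K) :
    MatEquiv K (triHyperplane ![α, β, 1, δ, 0]) (triHyperplane ![0, 0, 1, δ, 0]) :=
  matEquiv_triHyperplane (by simp) (by simp) β 0 0 0 0 (α - β)
    fun _ _ _ _ _ h => by linear_combination h

lemma not_reduced_triHyperplane_fst : ¬ Reduced K (triHyperplane ![1, 0, 0, 0, 0]) := by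
  refine not_reduced_of_col_eq_zero (j := 0) fun M hM => ?_
  obtain ⟨a, b, c, d, e, h, rfl⟩ := mem_triHyperplane.1 hM
  obtain rfl : a = 0 := by simpa using h
  ext i
  fin_cases i <;> rfl

lemma not_reduced_triHyperplane_snd : ¬ Reduced K (triHyperplane ![0, 1, 0, 0, 0]) := by
  refine not_reduced_of_row_eq_zero (i := 2) fun M hM => ?_
  obtain ⟨a, b, c, d, e, h, rfl⟩ := mem_triHyperplane.1 hM
  obtain rfl : b = 0 := by simpa using h
  ext j
  fin_cases j <;> rfl

lemma not_semiPrimitive_triHyperplane_fst_add_snd :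
    ¬ SemiPrimitive K (triHyperplane ![1, 1, 0, 0, 0]) := by
  let N : Matrix (Fin 3) (Fin 3) K := !![0, 1, 0; 0, 0, 1; 0, 0, 0]
  have hN : N ∈ triHyperplane ![1, 1, 0, 0, 0] :=
    mem_triHyperplane.2 ⟨0, 0, 1, 1, 0, by simp, by simp [N]⟩
  have hrankN : 2 ≤ N.rank := by
    have hblock : N.submatrix ![0, 1] ![1, 2] = 1 := by
      ext i j
      fin_cases i <;> fin_cases j <;> rfl
    simpa [hblock] using N.rank_submatrix_le ![0, 1] ![1, 2]
  refine not_semiPrimitive_of_rank_dropCol_lt hN fun M hM => ?_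
  obtain ⟨a, b, c, d, e, h, rfl⟩ := mem_triHyperplane.1 hM
  have hab : a + b = 0 := by simpa using h
  have hdrop : dropCol !![a, c, e; 0, a + b, d; 0, 0, b] = vecMulVec ![1, 0, 0] ![a, c] := by
    ext i j
    fin_cases i <;> fin_cases j <;> simp [dropCol, vecMulVec_apply, hab]
  rw [hdrop]
  exact (rank_vecMulVec_le _ _).trans_lt hrankN

end TriHyperplane

lemma J3_le_range_triMatrix : J3 ≤ LinearMap.range triMatrix := by
  rintro M ⟨htrace, hlower⟩
  have hdiag : M 1 1 = M 0 0 + M 2 2 := by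
    rw [trace_fin_three, add_right_comm, CharTwo.add_eq_zero] at htrace
    exact htrace.symm
  refine ⟨![M 0 0, M 2 2, M 0 1, M 1 2, M 0 2], ?_⟩
  ext i j
  fin_cases i <;> fin_cases j <;>
    simp [triMatrix_apply, hdiag, hlower 1 0 (by decide), hlower 2 0 (by decide),
      hlower 2 1 (by decide)]

lemma SpaceN1_eq_triHyperplane : SpaceN1 = triHyperplane ![0, 0, 0, 0, 1] := by
  ext M
  rw [mem_triHyperplane]
  simp [SpaceN1]

lemma SpaceN2_eq_triHyperplane : SpaceN2 = triHyperplane ![0, 0, 0, 1, 0] := by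
  ext M
  rw [mem_triHyperplane]
  simp [SpaceN2]

lemma SpaceN3_eq_triHyperplane : SpaceN3 = triHyperplane ![0, 0, 1, 0, 0] := by
  ext M
  rw [mem_triHyperplane]
  simpa [SpaceN3] using exists₂_congr fun _ _ => exists_comm

lemma SpaceN4_eq_triHyperplane : SpaceN4 = triHyperplane ![0, 0, 1, 1, 0] := by
  ext M
  rw [mem_triHyperplane]
  simp [SpaceN4, CharTwo.add_eq_zero]

lemma zmod_two_eq_zero_or_one (x : ZMod 2) : x = 0 ∨ x = 1 :=
  eq_zero_or_one_of_sq_eq_self (ZMod.pow_card x)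

lemma not_semiPrimitive_triHyperplane {α β : ZMod 2} (hne : ![α, β, 0, 0, 0] ≠ 0) :
    ¬ SemiPrimitive (ZMod 2) (triHyperplane ![α, β, 0, 0, 0]) := by
  rcases zmod_two_eq_zero_or_one α with rfl | rfl <;>
    rcases zmod_two_eq_zero_or_one β with rfl | rfl
  · simp at hne
  · exact fun h => not_reduced_triHyperplane_snd h.1
  · exact fun h => not_reduced_triHyperplane_fst h.1
  · exact not_semiPrimitive_triHyperplane_fst_add_snd

lemma matEquiv_SpaceN_of_semiPrimitive {α β γ δ ε : ZMod 2} (hne : ![α, β, γ, δ, ε] ≠ 0)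
    (hsemi : SemiPrimitive (ZMod 2) (triHyperplane ![α, β, γ, δ, ε])) :
    MatEquiv (ZMod 2) (triHyperplane ![α, β, γ, δ, ε]) SpaceN1 ∨
      MatEquiv (ZMod 2) (triHyperplane ![α, β, γ, δ, ε]) SpaceN2 ∨
      MatEquiv (ZMod 2) (triHyperplane ![α, β, γ, δ, ε]) SpaceN3 ∨
      MatEquiv (ZMod 2) (triHyperplane ![α, β, γ, δ, ε]) SpaceN4 := by
  rw [SpaceN1_eq_triHyperplane, SpaceN2_eq_triHyperplane, SpaceN3_eq_triHyperplane,
    SpaceN4_eq_triHyperplane]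
  rcases zmod_two_eq_zero_or_one ε with rfl | rfl
  · rcases zmod_two_eq_zero_or_one γ with rfl | rfl <;>
      rcases zmod_two_eq_zero_or_one δ with rfl | rfl
    · exact absurd hsemi (not_semiPrimitive_triHyperplane hne)
    · exact .inr (.inl (matEquiv_triHyperplane_right α β))
    · exact .inr (.inr (.inl (matEquiv_triHyperplane_upper α β 0)))
    · exact .inr (.inr (.inr (matEquiv_triHyperplane_upper α β 1)))
  · exact .inl (matEquiv_triHyperplane_upperRight α β γ δ)

lemma evalRankCount_SpaceN1 : evalRankCount SpaceN1 2 = 3 := by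
  rw [evalRankCount_eq_card (N := fun (a, b, c, d) => !![a, c, 0; 0, a + b, d; 0, 0, b])
    (by ext; simp [SpaceN1, eq_comm])]
  decide

lemma evalRankCount_SpaceN2 : evalRankCount SpaceN2 2 = 4 := by
  rw [evalRankCount_eq_card (N := fun (a, b, c, d) => !![a, c, d; 0, a + b, 0; 0, 0, b])
    (by ext; simp [SpaceN2, eq_comm])]
  decide

lemma evalRankCount_SpaceN3 : evalRankCount SpaceN3 2 = 1 := by
  rw [evalRankCount_eq_card (N := fun (a, b, c, d) => !![a, 0, c; 0, a + b, d; 0, 0, b])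
    (by ext; simp [SpaceN3, eq_comm])]
  decide

lemma evalRankCount_SpaceN4 : evalRankCount SpaceN4 2 = 2 := by
  rw [evalRankCount_eq_card (N := fun (a, b, c, d) => !![a, c, d; 0, a + b, c; 0, 0, b])
    (by ext; simp [SpaceN4, eq_comm])]
  decide

theorem primitive_four_dimensional_subspace_of_J3_general
    (V : Submodule (ZMod 2) (Matrix (Fin 3) (Fin 3) (ZMod 2)))
    (hV : V ≤ J3) (hsemi : SemiPrimitive (ZMod 2) V)
    (hdim : Module.finrank (ZMod 2) V = 4) :
    ExactlyOne4 (MatEquiv (ZMod 2) V SpaceN1) (MatEquiv (ZMod 2) V SpaceN2)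
      (MatEquiv (ZMod 2) V SpaceN3) (MatEquiv (ZMod 2) V SpaceN4) := by
  have hexists : MatEquiv (ZMod 2) V SpaceN1 ∨ MatEquiv (ZMod 2) V SpaceN2 ∨
      MatEquiv (ZMod 2) V SpaceN3 ∨ MatEquiv (ZMod 2) V SpaceN4 := by
    obtain ⟨f, hf, rfl⟩ := exists_eq_triHyperplane (hV.trans J3_le_range_triMatrix) hdim
    obtain ⟨α, β, γ, δ, ε, rfl⟩ : ∃ α β γ δ ε, f = ![α, β, γ, δ, ε] :=
      ⟨_, _, _, _, _, (FinVec.etaExpand_eq f).symm⟩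
    exact matEquiv_SpaceN_of_semiPrimitive hf hsemi
  have hcount₁ (h : MatEquiv (ZMod 2) V SpaceN1) : evalRankCount V 2 = 3 :=
    (h.evalRankCount_eq 2).trans evalRankCount_SpaceN1
  have hcount₂ (h : MatEquiv (ZMod 2) V SpaceN2) : evalRankCount V 2 = 4 :=
    (h.evalRankCount_eq 2).trans evalRankCount_SpaceN2
  have hcount₃ (h : MatEquiv (ZMod 2) V SpaceN3) : evalRankCount V 2 = 1 :=
    (h.evalRankCount_eq 2).trans evalRankCount_SpaceN3
  have hcount₄ (h : MatEquiv (ZMod 2) V SpaceN4) : evalRankCount V 2 = 2 :=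
    (h.evalRankCount_eq 2).trans evalRankCount_SpaceN4
  grind [ExactlyOne4]

theorem primitive_four_dimensional_subspace_of_J3
    (V : Submodule (ZMod 2) (Matrix (Fin 3) (Fin 3) (ZMod 2)))
    (hV : V ≤ J3) (hprim : Primitive (ZMod 2) V)
    (hdim : Module.finrank (ZMod 2) V = 4) :
    ExactlyOne4 (MatEquiv (ZMod 2) V SpaceN1) (MatEquiv (ZMod 2) V SpaceN2)
      (MatEquiv (ZMod 2) V SpaceN3) (MatEquiv (ZMod 2) V SpaceN4) :=
  primitive_four_dimensional_subspace_of_J3_general V hV hprim.1 hdim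
end

section
/- Up to similarity, there are exactly three irreducible 3-dimensional linear subspaces of the 3×3 matrices over F2 with trivial spectrum, namely: T1 = {[[a,b,a],[a,a,c],[b+c,a,a]] : a,b,c ∈ F2}, T2 = {[[a,b,a],[a,a,c],[0,a,a]] : a,b,c ∈ F2}, and T3 = {[[a,b,a],[a,0,c],[0,a,a]] : a,b,c ∈ F2}. That is, each of T1, T2, T3 is an irreducible 3-dimensional trivial spectrum subspace, they are pairwise not similar, and every irreducible 3-dimensional trivial spectrum subspace of the 3×3 matrices over F2 is similar to one of them. -/
open Matrix

/-- A subspace of square matrices has *trivial spectrum* when no matrix of it has a nonzero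
eigenvalue. -/
def TrivialSpectrum {n : ℕ} (V : Submodule (ZMod 2) (Matrix (Fin n) (Fin n) (ZMod 2))) : Prop :=
  ∀ M ∈ V, ∀ (c : ZMod 2) (x : Fin n → ZMod 2), c ≠ 0 → x ≠ 0 → M.mulVec x ≠ c • x

/-- Two subspaces of square matrices are *similar* when one is obtained from the other by
conjugating by a fixed invertible matrix. -/
def MatSimilar {n : ℕ} (V₁ V₂ : Submodule (ZMod 2) (Matrix (Fin n) (Fin n) (ZMod 2))) : Prop :=
  ∃ P : Matrix (Fin n) (Fin n) (ZMod 2), IsUnit P ∧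
    (V₂ : Set (Matrix (Fin n) (Fin n) (ZMod 2))) =
      (fun M => P * M * P⁻¹) '' (V₁ : Set (Matrix (Fin n) (Fin n) (ZMod 2)))

/-- A subspace of square matrices is *irreducible* when it stabilizes no nonzero proper
subspace of the underlying vector space. -/
def IrredMatSpace {n : ℕ} (V : Submodule (ZMod 2) (Matrix (Fin n) (Fin n) (ZMod 2))) : Prop :=
  ¬ ∃ F : Submodule (ZMod 2) (Fin n → ZMod 2), F ≠ ⊥ ∧ F ≠ ⊤ ∧
      ∀ M ∈ V, ∀ x ∈ F, M.mulVec x ∈ F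

/-- `T1`: the matrices `!![a, b, a; a, a, c; b + c, a, a]`. -/
def SpaceT1 : Submodule (ZMod 2) (Matrix (Fin 3) (Fin 3) (ZMod 2)) where
  carrier := {M | ∃ a b c : ZMod 2, M = !![a, b, a; a, a, c; b + c, a, a]}
  add_mem' := by
    rintro M N ⟨a, b, c, rfl⟩ ⟨a', b', c', rfl⟩
    exact ⟨a + a', b + b', c + c', by revert a b c a' b' c'; decide⟩
  zero_mem' := ⟨0, 0, 0, by decide⟩
  smul_mem' := by
    rintro k M ⟨a, b, c, rfl⟩
    exact ⟨k * a, k * b, k * c, by revert k a b c; decide⟩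

/-- `T2`: the matrices `!![a, b, a; a, a, c; 0, a, a]`. -/
def SpaceT2 : Submodule (ZMod 2) (Matrix (Fin 3) (Fin 3) (ZMod 2)) where
  carrier := {M | ∃ a b c : ZMod 2, M = !![a, b, a; a, a, c; 0, a, a]}
  add_mem' := by
    rintro M N ⟨a, b, c, rfl⟩ ⟨a', b', c', rfl⟩
    exact ⟨a + a', b + b', c + c', by revert a b c a' b' c'; decide⟩
  zero_mem' := ⟨0, 0, 0, by decide⟩
  smul_mem' := by
    rintro k M ⟨a, b, c, rfl⟩
    exact ⟨k * a, k * b, k * c, by revert k a b c; decide⟩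

/-- `T3`: the matrices `!![a, b, a; a, 0, c; 0, a, a]`. -/
def SpaceT3 : Submodule (ZMod 2) (Matrix (Fin 3) (Fin 3) (ZMod 2)) where
  carrier := {M | ∃ a b c : ZMod 2, M = !![a, b, a; a, 0, c; 0, a, a]}
  add_mem' := by
    rintro M N ⟨a, b, c, rfl⟩ ⟨a', b', c', rfl⟩
    exact ⟨a + a', b + b', c + c', by revert a b c a' b' c'; decide⟩
  zero_mem' := ⟨0, 0, 0, by decide⟩
  smul_mem' := by
    rintro k M ⟨a, b, c, rfl⟩
    exact ⟨k * a, k * b, k * c, by revert k a b c; decide⟩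

/-!
Over `F₂` trivial spectrum means `det (1 + M) = 1` for every `M` in the space, and the models are
separated by determinants and traces: all elements of `T1` are singular, all nonsingular elements
of `T2` have trace `1`, and `T3` has a nonsingular element of trace `0`.

If a space `V` of trivial spectrum has a matrix of rank one, it is conjugate to one containing the
elementary matrix `E₀₁`. Comparing `det (1 + M)` with `det (1 + M + E₀₁)` gives the relation
`M₁₀ (1 + M₂₂) = M₁₂ M₂₀` on the space; irreducibility yields an element with `M₁₀ = 1`, and
normalizing it leads to `T2` or `T3` according to its trace.

Otherwise every nonzero element of `V` has a kernel of dimension at most one. As `M x ∈ {0, x}`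
can be forced by two linear conditions on `M`, each nonzero `x` is killed by a nonzero element, and
counting makes this a bijection between nonzero vectors and nonzero elements of `V`. Hence
all elements are singular, and the kernels of two trace-zero elements and of their sum form a basis
in which `V` becomes `T1` up to a permutation.
-/

section LinearAlgebra

variable {K E F : Type*} [Field K] [AddCommGroup E] [Module K E] [AddCommGroup F] [Module K F]

theorem exists_mem_ne_zero_of_finrank_lt [FiniteDimensional K F] {V : Submodule K E}
    [FiniteDimensional K V] (f : E →ₗ[K] F) (h : Module.finrank K F < Module.finrank K V) :
    ∃ v ∈ V, v ≠ 0 ∧ f v = 0 := by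
  obtain ⟨v, hv, hv0⟩ :=
    (Submodule.ne_bot_iff _).1 (LinearMap.ker_ne_bot_of_finrank_lt (f := f ∘ₗ V.subtype) h)
  exact ⟨v, v.2, by simpa using hv0, hv⟩

/-- If two functionals were both nonzero on `V`, some vector of `V` would avoid both kernels. -/
theorem forall_eq_zero_or_forall_eq_zero_of_mul_eq_zero {V : Submodule K E} {f g : E →ₗ[K] K}
    (h : ∀ v ∈ V, f v * g v = 0) : (∀ v ∈ V, f v = 0) ∨ ∀ v ∈ V, g v = 0 := by
  by_contra! hfg
  obtain ⟨⟨v, hv, hfv⟩, w, hw, hgw⟩ := hfg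
  have hgv : g v = 0 := (mul_eq_zero.1 (h v hv)).resolve_left hfv
  have hfw : f w = 0 := (mul_eq_zero.1 (h w hw)).resolve_right hgw
  have := h (v + w) (V.add_mem hv hw)
  simp_all

theorem exists_mem_mem_trace_eq_zero {ι : Type*} [Fintype ι] {V : Submodule K (Matrix ι ι K)}
    (hfin : 2 < Module.finrank K V) :
    ∃ A ∈ V, ∃ B ∈ V, A ≠ 0 ∧ B ≠ 0 ∧ A ≠ B ∧ A.trace = 0 ∧ B.trace = 0 := by
  obtain ⟨A, hA, hA0, hAtr⟩ := exists_mem_ne_zero_of_finrank_lt (V := V)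
    (traceLinearMap ι K K) (by rw [Module.finrank_self]; lia)
  obtain ⟨i, j, hij⟩ : ∃ i j, A i j ≠ 0 := by
    by_contra! h
    exact hA0 (Matrix.ext h)
  obtain ⟨B, hB, hB0, hBker⟩ := exists_mem_ne_zero_of_finrank_lt (V := V)
    ((traceLinearMap ι K K).prod (entryLinearMap K K i j)) (by simpa using hfin)
  obtain ⟨hBtr, hBij⟩ : B.trace = 0 ∧ B i j = 0 := Prod.mk_eq_zero.1 hBker
  exact ⟨A, hA, B, hB, hA0, hB0, fun h => hij (h ▸ hBij), hAtr, hBtr⟩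

end LinearAlgebra

theorem eq_of_col_eq {R : Type*} {N : Matrix (Fin 3) (Fin 3) R} {u v w : Fin 3 → R}
    (hu : N.col 0 = u) (hv : N.col 1 = v) (hw : N.col 2 = w) :
    N = !![u 0, v 0, w 0; u 1, v 1, w 1; u 2, v 2, w 2] := by
  subst hu hv hw
  exact N.eta_fin_three

section ZModTwo

variable {E : Type*} [AddCommGroup E] [Module (ZMod 2) E]

theorem eq_one_of_ne_zero {c : ZMod 2} (hc : c ≠ 0) : c = 1 := by
  decide +revert

theorem eq_zero_or_eq_one (c : ZMod 2) : c = 0 ∨ c = 1 :=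
  or_iff_not_imp_left.2 eq_one_of_ne_zero

theorem linearIndependent_of_add_ne {x y z : E} (hx : x ≠ 0) (hy : y ≠ 0) (hxy : x ≠ y)
    (hz : z ≠ 0) (hzx : z ≠ x) (hzy : z ≠ y) (hzxy : z ≠ x + y) :
    LinearIndependent (ZMod 2) ![x, y, z] := by
  have hpair : LinearIndependent (ZMod 2) ![y, z] := by
    rw [LinearIndependent.pair_iff' hy]
    intro a
    obtain rfl | rfl := eq_zero_or_eq_one a
    · simpa using hz.symm
    · simpa using hzy.symm
  refine linearIndependent_finCons.2 ⟨hpair, fun h => ?_⟩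
  rw [range_cons, range_cons, range_empty, Set.union_empty, Set.singleton_union,
    Submodule.mem_span_pair] at h
  obtain ⟨a, b, h⟩ := h
  have hz' : z = x + y ↔ y + z = x := by
    rw [eq_comm, ← ZModModule.sub_eq_add x, sub_eq_iff_eq_add, add_comm y, eq_comm]
  obtain rfl | rfl := eq_zero_or_eq_one a <;> obtain rfl | rfl := eq_zero_or_eq_one b <;> simp_all

theorem finrank_eq_of_parametrization {n : ℕ} {V : Submodule (ZMod 2) E}
    (f : (Fin n → ZMod 2) → E) (hadd : ∀ u v, f (u + v) = f u + f v)
    (hinj : ∀ u, f u = 0 → u = 0) (hV : ∀ v, v ∈ V ↔ ∃ u, f u = v) :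
    Module.finrank (ZMod 2) V = n := by
  let g : (Fin n → ZMod 2) →ₗ[ZMod 2] E := (AddMonoidHom.mk' f hadd).toZModLinearMap 2
  have hg : Function.Injective g := (injective_iff_map_eq_zero g).2 hinj
  have hrange : V = g.range := Submodule.ext hV
  rw [hrange, LinearMap.finrank_range_of_inj hg, Module.finrank_fin_fun]

end ZModTwo

section Conjugation

variable {K ι : Type*} [Field K] [Fintype ι] [DecidableEq ι] {V : Submodule K (Matrix ι ι K)}

/-- The space `P V P⁻¹`, encoded as the preimage of `V` under conjugation by `P⁻¹`. -/
def conjSpace (P : (Matrix ι ι K)ˣ) (V : Submodule K (Matrix ι ι K)) :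
    Submodule K (Matrix ι ι K) :=
  V.comap (DistribMulAction.toLinearEquiv K _ (ConjAct.toConjAct P⁻¹)).toLinearMap

theorem mem_conjSpace {P : (Matrix ι ι K)ˣ} {N : Matrix ι ι K} :
    N ∈ conjSpace P V ↔ P⁻¹.val * N * P.val ∈ V :=
  Iff.rfl

theorem conj_mem_conjSpace (P : (Matrix ι ι K)ˣ) {M : Matrix ι ι K} (hM : M ∈ V) :
    P.val * M * P⁻¹.val ∈ conjSpace P V := by
  simpa [mem_conjSpace, mul_assoc] using hM

theorem finrank_conjSpace (P : (Matrix ι ι K)ˣ) :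
    Module.finrank K (conjSpace P V) = Module.finrank K V := by
  rw [conjSpace, Submodule.comap_equiv_eq_map_symm, LinearEquiv.finrank_map_eq]

theorem coe_conjSpace (P : (Matrix ι ι K)ˣ) :
    (conjSpace P V : Set (Matrix ι ι K)) = (fun M => P.val * M * P.val⁻¹) '' V := by
  rw [← coe_units_inv]
  ext N
  constructor
  · exact fun hN => ⟨_, mem_conjSpace.1 hN, by simp [mul_assoc]⟩
  · rintro ⟨M, hM, rfl⟩
    exact conj_mem_conjSpace P hM

theorem exists_units_mulVec_eq_single {b : ι → ι → K} (hb : LinearIndependent K b) :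
    ∃ P : (Matrix ι ι K)ˣ, ∀ j, P.val *ᵥ b j = Pi.single j 1 := by
  obtain ⟨Q, hQ⟩ : IsUnit (of b)ᵀ := linearIndependent_cols_iff_isUnit.1 hb
  refine ⟨Q⁻¹, fun j => ?_⟩
  have hQj : Q.val *ᵥ Pi.single j 1 = b j := by
    rw [hQ, mulVec_single_one]
    rfl
  rw [← hQj, mulVec_mulVec, Q.inv_mul, one_mulVec]

theorem col_conj_of_mulVec_eq_single {P : (Matrix ι ι K)ˣ} {v : ι → K} {j : ι}
    (hv : P.val *ᵥ v = Pi.single j 1) (M : Matrix ι ι K) :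
    (P.val * M * P⁻¹.val).col j = P.val *ᵥ (M *ᵥ v) := by
  rw [← mulVec_single_one, ← hv, mulVec_mulVec, mulVec_mulVec, mul_assoc, P.inv_mul, mul_one]

theorem units_conj_ne_zero {R : Type*} [MonoidWithZero R] (u : Rˣ) {r : R} (hr : r ≠ 0) :
    u.val * r * u⁻¹.val ≠ 0 := by
  rwa [Ne, Units.mul_left_eq_zero, Units.mul_right_eq_zero]

end Conjugation

section Similarity

variable {n : ℕ} {V W U : Submodule (ZMod 2) (Matrix (Fin n) (Fin n) (ZMod 2))}

theorem matSimilar_iff :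
    MatSimilar V W ↔ ∃ P : (Matrix (Fin n) (Fin n) (ZMod 2))ˣ, W = conjSpace P V := by
  constructor
  · rintro ⟨_, ⟨P, rfl⟩, h⟩
    exact ⟨P, SetLike.coe_injective (h.trans (coe_conjSpace P).symm)⟩
  · rintro ⟨P, rfl⟩
    exact ⟨P, P.isUnit, coe_conjSpace P⟩

theorem matSimilar_conjSpace (P : (Matrix (Fin n) (Fin n) (ZMod 2))ˣ)
    (V : Submodule (ZMod 2) (Matrix (Fin n) (Fin n) (ZMod 2))) : MatSimilar V (conjSpace P V) :=
  matSimilar_iff.2 ⟨P, rfl⟩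

theorem MatSimilar.trans (h : MatSimilar V W) (h' : MatSimilar W U) : MatSimilar V U := by
  obtain ⟨P, rfl⟩ := matSimilar_iff.1 h
  obtain ⟨Q, rfl⟩ := matSimilar_iff.1 h'
  exact matSimilar_iff.2 ⟨Q * P, by ext M; simp [mem_conjSpace, mul_assoc]⟩

theorem MatSimilar.finrank_eq (h : MatSimilar V W) :
    Module.finrank (ZMod 2) W = Module.finrank (ZMod 2) V := by
  obtain ⟨P, rfl⟩ := matSimilar_iff.1 h
  exact finrank_conjSpace P

theorem MatSimilar.of_forall_conj_mem (P : (Matrix (Fin n) (Fin n) (ZMod 2))ˣ)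
    (hfin : Module.finrank (ZMod 2) V = Module.finrank (ZMod 2) W)
    (h : ∀ N ∈ W, P⁻¹.val * N * P.val ∈ V) : MatSimilar V W :=
  matSimilar_iff.2 ⟨P, Submodule.eq_of_le_of_finrank_eq (fun N hN => mem_conjSpace.2 (h N hN))
    (by rw [finrank_conjSpace, hfin])⟩

theorem trivialSpectrum_iff_det :
    TrivialSpectrum V ↔ ∀ M ∈ V, (1 + M).det ≠ 0 := by
  have key (M : Matrix (Fin n) (Fin n) (ZMod 2)) (x : Fin n → ZMod 2) :
      (1 + M) *ᵥ x = 0 ↔ M *ᵥ x = x := by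
    rw [add_mulVec, one_mulVec, ← ZModModule.sub_eq_add, sub_eq_zero, eq_comm]
  refine forall₂_congr fun M _ => ?_
  rw [Ne, ← exists_mulVec_eq_zero_iff, not_exists]
  constructor
  · rintro h x ⟨hx, hMx⟩
    exact h 1 x one_ne_zero hx (by rw [(key M x).1 hMx, one_smul])
  · rintro h c x hc hx hMx
    rw [eq_one_of_ne_zero hc, one_smul] at hMx
    exact h x ⟨hx, (key M x).2 hMx⟩

theorem TrivialSpectrum.mulVec_ne_self (hV : TrivialSpectrum V)
    {M : Matrix (Fin n) (Fin n) (ZMod 2)} (hM : M ∈ V) {x : Fin n → ZMod 2} (hx : x ≠ 0) :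
    M *ᵥ x ≠ x := by
  simpa using hV M hM 1 x one_ne_zero hx

theorem TrivialSpectrum.of_matSimilar (hV : TrivialSpectrum V) (h : MatSimilar V W) :
    TrivialSpectrum W := by
  rw [trivialSpectrum_iff_det] at hV ⊢
  obtain ⟨P, rfl⟩ := matSimilar_iff.1 h
  intro M hM
  have := hV _ (mem_conjSpace.1 hM)
  rwa [← det_units_conj' P, mul_add, add_mul, mul_one, Units.inv_mul]

theorem IrredMatSpace.of_matSimilar (hV : IrredMatSpace V) (h : MatSimilar V W) :
    IrredMatSpace W := by
  obtain ⟨P, rfl⟩ := matSimilar_iff.1 h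
  have map_inv (x : Fin n → ZMod 2) : P.val *ᵥ (P⁻¹.val *ᵥ x) = x := by
    rw [mulVec_mulVec, P.mul_inv, one_mulVec]
  rintro ⟨F, hbot, htop, hF⟩
  refine hV ⟨F.comap P.val.mulVecLin, fun hF' => hbot ?_, fun hF' => htop ?_, fun M hM x hx => ?_⟩
  · refine (Submodule.eq_bot_iff _).2 fun x hx => ?_
    have : P⁻¹.val *ᵥ x ∈ F.comap P.val.mulVecLin := by simpa [map_inv] using hx
    rw [hF', Submodule.mem_bot] at this
    rw [← map_inv x, this, mulVec_zero]
  · refine Submodule.eq_top_iff'.2 fun x => ?_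
    have : P⁻¹.val *ᵥ x ∈ F.comap P.val.mulVecLin := hF' ▸ Submodule.mem_top
    simpa [map_inv] using this
  · have := hF _ (conj_mem_conjSpace P hM) _ hx
    simpa [mul_assoc] using this

/-- A space of matrices is *rank-one free* when none of its matrices has rank one. -/
def RankOneFree (V : Submodule (ZMod 2) (Matrix (Fin n) (Fin n) (ZMod 2))) : Prop :=
  ∀ M ∈ V, M.rank ≠ 1

theorem RankOneFree.of_matSimilar (hV : RankOneFree V) (h : MatSimilar V W) : RankOneFree W := by
  obtain ⟨P, rfl⟩ := matSimilar_iff.1 h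
  intro M hM
  have hdet (Q : (Matrix (Fin n) (Fin n) (ZMod 2))ˣ) : IsUnit Q.val.det :=
    (isUnit_iff_isUnit_det _).1 Q.isUnit
  have := hV _ (mem_conjSpace.1 hM)
  rwa [rank_mul_eq_left_of_isUnit_det _ _ (hdet _),
    rank_mul_eq_right_of_isUnit_det _ _ (hdet _)] at this

theorem RankOneFree.vector_eq_of_mulVec_eq_zero
    {V : Submodule (ZMod 2) (Matrix (Fin 3) (Fin 3) (ZMod 2))}
    (hV : RankOneFree V) {M : Matrix (Fin 3) (Fin 3) (ZMod 2)} (hM : M ∈ V) (hM0 : M ≠ 0)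
    {x y : Fin 3 → ZMod 2} (hx : x ≠ 0) (hy : y ≠ 0) (hMx : M *ᵥ x = 0) (hMy : M *ᵥ y = 0) :
    x = y := by
  have hrank : M.rank ≠ 0 := fun h => hM0 <| by
    rw [Matrix.rank, Submodule.finrank_eq_zero, LinearMap.range_eq_bot] at h
    exact (toLin' : _ ≃ₗ[ZMod 2] _).map_eq_zero_iff.1 h
  have hker : Module.finrank (ZMod 2) M.mulVecLin.ker ≤ 1 := by
    have hsum := M.mulVecLin.finrank_range_add_finrank_ker
    rw [Module.finrank_fin_fun, ← Matrix.rank] at hsum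
    have := hV M hM
    lia
  obtain ⟨v, hv⟩ := finrank_le_one_iff.1 hker
  have eq_of_ker {z : Fin 3 → ZMod 2} (hz : z ≠ 0) (hMz : M *ᵥ z = 0) : z = v := by
    obtain ⟨c, hc⟩ := hv ⟨z, hMz⟩
    replace hc : c • (v : Fin 3 → ZMod 2) = z := congrArg Subtype.val hc
    have hc0 : c ≠ 0 := by
      rintro rfl
      exact hz (by rw [← hc, zero_smul])
    rw [← hc, eq_one_of_ne_zero hc0, one_smul]
  rw [eq_of_ker hx hMx, eq_of_ker hy hMy]

end Similarity

section Irreducibility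

variable {n : ℕ} {V : Submodule (ZMod 2) (Matrix (Fin n) (Fin n) (ZMod 2))}

theorem IrredMatSpace.exists_mulVec_ne_zero (hn : 1 < n) (hV : IrredMatSpace V)
    {x : Fin n → ZMod 2} (hx : x ≠ 0) : ∃ M ∈ V, M *ᵥ x ≠ 0 := by
  by_contra! h
  refine hV ⟨Submodule.span (ZMod 2) {x}, by simpa using hx, fun htop => ?_, fun M hM y hy => ?_⟩
  · have := finrank_span_singleton (K := ZMod 2) hx
    rw [htop, finrank_top, Module.finrank_fin_fun] at this
    exact hn.ne' this
  · obtain ⟨k, rfl⟩ := Submodule.mem_span_singleton.1 hy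
    rw [mulVec_smul, h M hM, smul_zero]
    exact Submodule.zero_mem _

theorem IrredMatSpace.exists_vecMul_ne_zero (hn : 1 < n) (hV : IrredMatSpace V)
    {y : Fin n → ZMod 2} (hy : y ≠ 0) : ∃ M ∈ V, y ᵥ* M ≠ 0 := by
  by_contra! h
  refine hV ⟨(dotProductEquiv (ZMod 2) (Fin n) y).ker, ?_, fun htop => ?_, fun M hM x _ => ?_⟩
  · apply LinearMap.ker_ne_bot_of_finrank_lt
    simpa using hn
  · rw [LinearMap.ker_eq_top, LinearEquiv.map_eq_zero_iff] at htop
    exact hy htop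
  · rw [LinearMap.mem_ker, dotProductEquiv_apply_apply, dotProduct_mulVec, h M hM,
      zero_dotProduct]

theorem IrredMatSpace.of_forall_exists_dotProduct_ne_zero
    (h : ∀ x y : Fin n → ZMod 2, x ≠ 0 → y ≠ 0 →
      ∃ M ∈ V, ∃ N ∈ V, y ⬝ᵥ M *ᵥ x ≠ 0 ∨ y ⬝ᵥ M *ᵥ N *ᵥ x ≠ 0) :
    IrredMatSpace V := by
  rintro ⟨F, hbot, htop, hF⟩
  obtain ⟨x, hxF, hx⟩ := Submodule.exists_mem_ne_zero_of_ne_bot hbot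
  obtain ⟨φ, hφ, hker⟩ := Submodule.exists_le_ker_of_lt_top F (lt_top_iff_ne_top.2 htop)
  obtain ⟨y, rfl⟩ := (dotProductEquiv (ZMod 2) (Fin n)).surjective φ
  rw [Ne, LinearEquiv.map_eq_zero_iff] at hφ
  obtain ⟨M, hM, N, hN, hMx | hMNx⟩ := h x y hx hφ
  · exact hMx (hker (hF M hM x hxF))
  · exact hMNx (hker (hF M hM _ (hF N hN x hxF)))

end Irreducibility

section Models

theorem trivialSpectrum_spaceT1 : TrivialSpectrum SpaceT1 := by
  rw [trivialSpectrum_iff_det]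
  rintro _ ⟨a, b, c, rfl⟩
  decide +revert +kernel

theorem trivialSpectrum_spaceT2 : TrivialSpectrum SpaceT2 := by
  rw [trivialSpectrum_iff_det]
  rintro _ ⟨a, b, c, rfl⟩
  decide +revert +kernel

theorem trivialSpectrum_spaceT3 : TrivialSpectrum SpaceT3 := by
  rw [trivialSpectrum_iff_det]
  rintro _ ⟨a, b, c, rfl⟩
  decide +revert +kernel

theorem irredMatSpace_spaceT1 : IrredMatSpace SpaceT1 := by
  refine .of_forall_exists_dotProduct_ne_zero fun x y hx hy => ?_
  obtain ⟨a, b, c, a', b', c', h⟩ : ∃ a b c a' b' c' : ZMod 2,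
      y ⬝ᵥ !![a, b, a; a, a, c; b + c, a, a] *ᵥ x ≠ 0 ∨
        y ⬝ᵥ !![a, b, a; a, a, c; b + c, a, a] *ᵥ
          !![a', b', a'; a', a', c'; b' + c', a', a'] *ᵥ x ≠ 0 := by
    decide +revert +kernel
  exact ⟨_, ⟨a, b, c, rfl⟩, _, ⟨a', b', c', rfl⟩, h⟩

theorem irredMatSpace_spaceT2 : IrredMatSpace SpaceT2 := by
  refine .of_forall_exists_dotProduct_ne_zero fun x y hx hy => ?_
  obtain ⟨a, b, c, a', b', c', h⟩ : ∃ a b c a' b' c' : ZMod 2,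
      y ⬝ᵥ !![a, b, a; a, a, c; 0, a, a] *ᵥ x ≠ 0 ∨
        y ⬝ᵥ !![a, b, a; a, a, c; 0, a, a] *ᵥ !![a', b', a'; a', a', c'; 0, a', a'] *ᵥ x ≠ 0 := by
    decide +revert +kernel
  exact ⟨_, ⟨a, b, c, rfl⟩, _, ⟨a', b', c', rfl⟩, h⟩

theorem irredMatSpace_spaceT3 : IrredMatSpace SpaceT3 := by
  refine .of_forall_exists_dotProduct_ne_zero fun x y hx hy => ?_
  obtain ⟨a, b, c, a', b', c', h⟩ : ∃ a b c a' b' c' : ZMod 2,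
      y ⬝ᵥ !![a, b, a; a, 0, c; 0, a, a] *ᵥ x ≠ 0 ∨
        y ⬝ᵥ !![a, b, a; a, 0, c; 0, a, a] *ᵥ !![a', b', a'; a', 0, c'; 0, a', a'] *ᵥ x ≠ 0 := by
    decide +revert +kernel
  exact ⟨_, ⟨a, b, c, rfl⟩, _, ⟨a', b', c', rfl⟩, h⟩

theorem finrank_spaceT1 : Module.finrank (ZMod 2) SpaceT1 = 3 := by
  refine finrank_eq_of_parametrization
    (fun u : Fin 3 → ZMod 2 => !![u 0, u 1, u 0; u 0, u 0, u 2; u 1 + u 2, u 0, u 0])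
    (by decide +kernel) (by decide +kernel) fun M => ⟨?_, ?_⟩
  · rintro ⟨a, b, c, rfl⟩
    exact ⟨![a, b, c], rfl⟩
  · rintro ⟨u, rfl⟩
    exact ⟨u 0, u 1, u 2, rfl⟩

theorem finrank_spaceT2 : Module.finrank (ZMod 2) SpaceT2 = 3 := by
  refine finrank_eq_of_parametrization
    (fun u : Fin 3 → ZMod 2 => !![u 0, u 1, u 0; u 0, u 0, u 2; 0, u 0, u 0])
    (by decide +kernel) (by decide +kernel) fun M => ⟨?_, ?_⟩
  · rintro ⟨a, b, c, rfl⟩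
    exact ⟨![a, b, c], rfl⟩
  · rintro ⟨u, rfl⟩
    exact ⟨u 0, u 1, u 2, rfl⟩

theorem finrank_spaceT3 : Module.finrank (ZMod 2) SpaceT3 = 3 := by
  refine finrank_eq_of_parametrization
    (fun u : Fin 3 → ZMod 2 => !![u 0, u 1, u 0; u 0, 0, u 2; 0, u 0, u 0])
    (by decide +kernel) (by decide +kernel) fun M => ⟨?_, ?_⟩
  · rintro ⟨a, b, c, rfl⟩
    exact ⟨![a, b, c], rfl⟩
  · rintro ⟨u, rfl⟩
    exact ⟨u 0, u 1, u 2, rfl⟩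

theorem MatSimilar.exists_det_eq_trace_eq {n : ℕ}
    {V W : Submodule (ZMod 2) (Matrix (Fin n) (Fin n) (ZMod 2))} (h : MatSimilar V W)
    {N : Matrix (Fin n) (Fin n) (ZMod 2)} (hN : N ∈ W) :
    ∃ M ∈ V, M.det = N.det ∧ M.trace = N.trace := by
  obtain ⟨P, rfl⟩ := matSimilar_iff.1 h
  exact ⟨_, mem_conjSpace.1 hN, det_units_conj' P N, trace_units_conj' P N⟩

theorem det_eq_zero_of_mem_spaceT1 {M : Matrix (Fin 3) (Fin 3) (ZMod 2)} (hM : M ∈ SpaceT1) :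
    M.det = 0 := by
  obtain ⟨a, b, c, rfl⟩ := hM
  decide +revert +kernel

theorem trace_eq_one_of_mem_spaceT2 {M : Matrix (Fin 3) (Fin 3) (ZMod 2)} (hM : M ∈ SpaceT2)
    (hdet : M.det ≠ 0) : M.trace = 1 := by
  obtain ⟨a, b, c, rfl⟩ := hM
  decide +revert +kernel

theorem exists_mem_spaceT3_det_eq_one_trace_eq_zero :
    ∃ M ∈ SpaceT3, M.det = 1 ∧ M.trace = 0 :=
  ⟨_, ⟨1, 0, 0, rfl⟩, by decide +kernel⟩

theorem not_matSimilar_spaceT1_spaceT2 : ¬ MatSimilar SpaceT1 SpaceT2 := by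
  intro h
  obtain ⟨M, hM, hdet, -⟩ := h.exists_det_eq_trace_eq ⟨1, 1, 0, rfl⟩
  rw [det_eq_zero_of_mem_spaceT1 hM] at hdet
  revert hdet
  decide +kernel

theorem not_matSimilar_spaceT1_spaceT3 : ¬ MatSimilar SpaceT1 SpaceT3 := by
  intro h
  obtain ⟨N, hN, hdetN, -⟩ := exists_mem_spaceT3_det_eq_one_trace_eq_zero
  obtain ⟨M, hM, hdet, -⟩ := h.exists_det_eq_trace_eq hN
  rw [det_eq_zero_of_mem_spaceT1 hM, hdetN] at hdet
  exact zero_ne_one hdet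

theorem not_matSimilar_spaceT2_spaceT3 : ¬ MatSimilar SpaceT2 SpaceT3 := by
  intro h
  obtain ⟨N, hN, hdetN, htraceN⟩ := exists_mem_spaceT3_det_eq_one_trace_eq_zero
  obtain ⟨M, hM, hdet, htrace⟩ := h.exists_det_eq_trace_eq hN
  have hM0 : M.det ≠ 0 := by rw [hdet, hdetN]; exact one_ne_zero
  rw [trace_eq_one_of_mem_spaceT2 hM hM0, htraceN] at htrace
  exact one_ne_zero htrace

end Models

section RankOne

variable {V W : Submodule (ZMod 2) (Matrix (Fin 3) (Fin 3) (ZMod 2))}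

theorem TrivialSpectrum.exists_linearIndependent_of_rank_eq_one (hV : TrivialSpectrum V)
    {M : Matrix (Fin 3) (Fin 3) (ZMod 2)} (hM : M ∈ V) (hM1 : M.rank = 1) :
    ∃ m w e, LinearIndependent (ZMod 2) ![m, w, e] ∧ M *ᵥ m = 0 ∧ M *ᵥ w = m ∧ M *ᵥ e = 0 := by
  obtain ⟨⟨m, w, hw⟩, hm, hspan⟩ := finrank_eq_one_iff'.1 hM1
  replace hw : M *ᵥ w = m := hw
  replace hm : m ≠ 0 := fun h => hm (Subtype.ext h)
  have hMm : M *ᵥ m = 0 := by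
    obtain ⟨c, hc⟩ := hspan ⟨M *ᵥ m, m, rfl⟩
    replace hc : M *ᵥ m = c • m := (congrArg Subtype.val hc).symm
    by_cases hc0 : c = 0
    · rw [hc, hc0, zero_smul]
    · exact absurd hc (hV M hM c m hc0 hm)
  obtain ⟨e, hMe, he⟩ : ∃ e, M *ᵥ e = 0 ∧ e ∉ Submodule.span (ZMod 2) {m} := by
    by_contra! h
    have hker : Module.finrank (ZMod 2) M.mulVecLin.ker ≤ 1 :=
      (Submodule.finrank_mono h).trans (finrank_span_singleton hm).le
    have hsum := M.mulVecLin.finrank_range_add_finrank_ker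
    rw [← Matrix.rank, hM1, Module.finrank_fin_fun] at hsum
    lia
  refine ⟨m, w, e, ?_, hMm, hw, hMe⟩
  refine linearIndependent_of_add_ne hm ?_ ?_ ?_ ?_ ?_ ?_ <;> rintro rfl
  · exact hm (by rw [← hw, mulVec_zero])
  · exact hm (hw.symm.trans hMm)
  · exact he (Submodule.zero_mem _)
  · exact he (Submodule.mem_span_singleton_self _)
  · exact hm (hw.symm.trans hMe)
  · exact hm (by rw [← hMe, mulVec_add, hMm, zero_add, hw])

theorem TrivialSpectrum.exists_matSimilar_elementary_mem (hV : TrivialSpectrum V)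
    (hrank : ¬ RankOneFree V) : ∃ W, MatSimilar V W ∧ !![0, 1, 0; 0, 0, 0; 0, 0, 0] ∈ W := by
  obtain ⟨M, hM, hM1⟩ : ∃ M ∈ V, M.rank = 1 := by simpa [RankOneFree] using hrank
  obtain ⟨m, w, e, hb, hMm, hw, hMe⟩ := hV.exists_linearIndependent_of_rank_eq_one hM hM1
  obtain ⟨P, hP⟩ := exists_units_mulVec_eq_single hb
  have h0 : (P.val * M * P⁻¹.val).col 0 = 0 := by
    rw [col_conj_of_mulVec_eq_single (hP 0), cons_val_zero, hMm, mulVec_zero]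
  have h1 : (P.val * M * P⁻¹.val).col 1 = Pi.single 0 1 := by
    rw [col_conj_of_mulVec_eq_single (hP 1), cons_val_one, cons_val_zero, hw]
    exact hP 0
  have h2 : (P.val * M * P⁻¹.val).col 2 = 0 := by
    rw [col_conj_of_mulVec_eq_single (hP 2)]
    exact hMe ▸ mulVec_zero P.val
  refine ⟨_, matSimilar_conjSpace P V, ?_⟩
  convert conj_mem_conjSpace P hM using 1
  rw [eq_of_col_eq h0 h1 h2]
  decide

theorem TrivialSpectrum.apply_self_eq_zero_of_column {n : ℕ}
    {V : Submodule (ZMod 2) (Matrix (Fin n) (Fin n) (ZMod 2))} (hV : TrivialSpectrum V)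
    {M : Matrix (Fin n) (Fin n) (ZMod 2)} (hM : M ∈ V) {j : Fin n}
    (h : ∀ i, i ≠ j → M i j = 0) : M j j = 0 := by
  by_contra hjj
  refine trivialSpectrum_iff_det.1 hV M hM (det_eq_zero_of_column_eq_zero j fun i => ?_)
  obtain rfl | hij := eq_or_ne i j
  · rw [Matrix.add_apply, one_apply_eq, eq_one_of_ne_zero hjj, CharTwo.add_self_eq_zero]
  · rw [Matrix.add_apply, one_apply_ne hij, h i hij, add_zero]

theorem TrivialSpectrum.apply_self_eq_zero_of_row {n : ℕ}
    {V : Submodule (ZMod 2) (Matrix (Fin n) (Fin n) (ZMod 2))} (hV : TrivialSpectrum V)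
    {M : Matrix (Fin n) (Fin n) (ZMod 2)} (hM : M ∈ V) {i : Fin n}
    (h : ∀ j, j ≠ i → M i j = 0) : M i i = 0 := by
  by_contra hii
  refine trivialSpectrum_iff_det.1 hV M hM (det_eq_zero_of_row_eq_zero i fun j => ?_)
  obtain rfl | hij := eq_or_ne j i
  · rw [Matrix.add_apply, one_apply_eq, eq_one_of_ne_zero hii, CharTwo.add_self_eq_zero]
  · rw [Matrix.add_apply, one_apply_ne hij.symm, h j hij, add_zero]

/-- The cofactor of the entry `(0, 1)` of `1 + M` is the difference of the determinants of
`1 + M` and `1 + M + E`, both of which are `1`. -/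
theorem TrivialSpectrum.mul_eq_mul_of_elementary_mem (hW : TrivialSpectrum W)
    (hE : !![0, 1, 0; 0, 0, 0; 0, 0, 0] ∈ W) {M : Matrix (Fin 3) (Fin 3) (ZMod 2)} (hM : M ∈ W) :
    M 1 0 * (1 + M 2 2) = M 1 2 * M 2 0 := by
  have hdet := eq_one_of_ne_zero (trivialSpectrum_iff_det.1 hW M hM)
  have hdetE := eq_one_of_ne_zero (trivialSpectrum_iff_det.1 hW _ (W.add_mem hM hE))
  simp only [det_fin_three, Fin.isValue, Matrix.add_apply, one_apply_eq, ne_eq, Fin.reduceEq,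
    not_false_eq_true, one_apply_ne, zero_add, zero_ne_one, one_ne_zero, of_apply, cons_val',
    cons_val_zero, cons_val_fin_one, add_zero, cons_val_one, cons_val] at hdet hdetE
  linear_combination hdet - hdetE

theorem TrivialSpectrum.exists_mem_apply_one_zero_ne_zero (hW : TrivialSpectrum W)
    (hirr : IrredMatSpace W) (hE : !![0, 1, 0; 0, 0, 0; 0, 0, 0] ∈ W) :
    ∃ A ∈ W, A 1 0 ≠ 0 := by
  by_contra! h10
  have hmul : ∀ M ∈ W, M 1 2 * M 2 0 = 0 := fun M hM => by
    rw [← hW.mul_eq_mul_of_elementary_mem hE hM, h10 M hM, zero_mul]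
  obtain h12 | h20 := forall_eq_zero_or_forall_eq_zero_of_mul_eq_zero
    (f := entryLinearMap (ZMod 2) (ZMod 2) 1 2) (g := entryLinearMap (ZMod 2) (ZMod 2) 2 0) hmul
  · obtain ⟨M, hM, hMrow⟩ := hirr.exists_vecMul_ne_zero (by decide)
      (y := Pi.single 1 1) (by simp)
    have h11 : M 1 1 = 0 := hW.apply_self_eq_zero_of_row hM fun j hj => by
      fin_cases j
      exacts [h10 M hM, absurd rfl hj, h12 M hM]
    refine hMrow (funext fun j => ?_)
    rw [single_one_vecMul]
    fin_cases j
    exacts [h10 M hM, h11, h12 M hM]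
  · obtain ⟨M, hM, hMcol⟩ := hirr.exists_mulVec_ne_zero (by decide)
      (x := Pi.single 0 1) (by simp)
    have h00 : M 0 0 = 0 := hW.apply_self_eq_zero_of_column hM fun i hi => by
      fin_cases i
      exacts [absurd rfl hi, h10 M hM, h20 M hM]
    refine hMcol (funext fun i => ?_)
    rw [mulVec_single_one]
    fin_cases i
    exacts [h00, h10 M hM, h20 M hM]

theorem TrivialSpectrum.mem_of_elementary_mem (hW : TrivialSpectrum W)
    (hE : !![0, 1, 0; 0, 0, 0; 0, 0, 0] ∈ W) {n q r s t : ZMod 2}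
    (hA : !![1, n, q; 1, r, 0; 0, s, t] ∈ W) : !![1, 0, 1; 1, r, 0; 0, 1, 1] ∈ W := by
  have hdet := trivialSpectrum_iff_det.1 hW _ hA
  have hdetE := trivialSpectrum_iff_det.1 hW _ (W.add_mem hA hE)
  obtain ⟨rfl, rfl, rfl⟩ : q = 1 ∧ s = 1 ∧ t = 1 := by
    clear hA hE hW
    decide +revert +kernel
  convert W.add_mem hA (W.smul_mem n hE) using 1
  clear hA hE hW hdet hdetE
  decide +revert +kernel

/-- Conjugation by `P` fixes the elementary matrix and moves column `0` of a matrix with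
nonzero entry `(1, 0)` to `(1, 1, 0)`. -/
theorem TrivialSpectrum.exists_matSimilar_mem_mem (hW : TrivialSpectrum W)
    (hirr : IrredMatSpace W) (hE : !![0, 1, 0; 0, 0, 0; 0, 0, 0] ∈ W) :
    ∃ U, MatSimilar W U ∧ !![0, 1, 0; 0, 0, 0; 0, 0, 0] ∈ U ∧
      ∃ r, !![1, 0, 1; 1, r, 0; 0, 1, 1] ∈ U := by
  obtain ⟨A, hA, hA10⟩ := hW.exists_mem_apply_one_zero_ne_zero hirr hE
  rw [A.eta_fin_three, eq_one_of_ne_zero hA10] at hA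
  generalize A 0 0 = a, A 0 1 = b, A 0 2 = c, A 1 1 = e, A 1 2 = f, A 2 0 = g,
    A 2 1 = h, A 2 2 = i at hA
  let P : (Matrix (Fin 3) (Fin 3) (ZMod 2))ˣ :=
    { val := !![1, a + 1 + f * g, f; 0, 1, 0; 0, g, 1]
      inv := !![1, a + 1, f; 0, 1, 0; 0, g, 1]
      val_inv := by clear hA; decide +revert +kernel
      inv_val := by clear hA; decide +revert +kernel }
  have hEU : !![0, 1, 0; 0, 0, 0; 0, 0, 0] ∈ conjSpace P W := by
    convert conj_mem_conjSpace P hE using 1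
    clear hA
    decide +revert +kernel
  let B := P.val * !![a, b, c; 1, e, f; g, h, i] * P⁻¹.val
  have hB : B ∈ conjSpace P W := conj_mem_conjSpace P hA
  obtain ⟨h00, h10, h12, h20⟩ : B 0 0 = 1 ∧ B 1 0 = 1 ∧ B 1 2 = 0 ∧ B 2 0 = 0 := by
    clear hA hEU hB
    decide +revert +kernel
  rw [B.eta_fin_three, h00, h10, h12, h20] at hB
  exact ⟨_, matSimilar_conjSpace P W, hEU, _,
    (hW.of_matSimilar (matSimilar_conjSpace P W)).mem_of_elementary_mem hEU hB⟩

theorem matSimilar_spaceT2_of_mem (hfin : Module.finrank (ZMod 2) V = 3)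
    (hE : !![0, 1, 0; 0, 0, 0; 0, 0, 0] ∈ V) (hA : !![1, 0, 1; 1, 1, 0; 0, 1, 1] ∈ V)
    (hB : !![0, 0, 0; 0, 0, 1; 0, 0, 0] ∈ V ∨ !![0, 0, 0; 0, 0, 0; 1, 0, 0] ∈ V) :
    MatSimilar V SpaceT2 := by
  have hfin' := hfin.trans finrank_spaceT2.symm
  obtain hB | hB := hB
  · refine .of_forall_conj_mem 1 hfin' ?_
    rintro _ ⟨a, b, c, rfl⟩
    convert V.add_mem (V.add_mem (V.smul_mem a hA) (V.smul_mem b hE)) (V.smul_mem c hB) using 1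
    clear hA hB hE hfin hfin'
    decide +revert +kernel
  · let P : (Matrix (Fin 3) (Fin 3) (ZMod 2))ˣ :=
      ⟨!![0, 0, 1; 1, 0, 0; 0, 1, 0], !![0, 1, 0; 0, 0, 1; 1, 0, 0], by decide, by decide⟩
    refine .of_forall_conj_mem P hfin' ?_
    rintro _ ⟨a, b, c, rfl⟩
    convert V.add_mem (V.add_mem (V.smul_mem a hA) (V.smul_mem c hE)) (V.smul_mem b hB) using 1
    clear hA hB hE hfin hfin'
    decide +revert +kernel

theorem matSimilar_spaceT3_of_mem (hfin : Module.finrank (ZMod 2) V = 3)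
    (hE : !![0, 1, 0; 0, 0, 0; 0, 0, 0] ∈ V) (hA : !![1, 0, 1; 1, 0, 0; 0, 1, 1] ∈ V)
    (hB : !![0, 0, 0; 0, 0, 1; 0, 0, 0] ∈ V ∨ !![0, 0, 0; 0, 0, 0; 1, 1, 0] ∈ V) :
    MatSimilar V SpaceT3 := by
  have hfin' := hfin.trans finrank_spaceT3.symm
  obtain hB | hB := hB
  · refine .of_forall_conj_mem 1 hfin' ?_
    rintro _ ⟨a, b, c, rfl⟩
    convert V.add_mem (V.add_mem (V.smul_mem a hA) (V.smul_mem b hE)) (V.smul_mem c hB) using 1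
    clear hA hB hE hfin hfin'
    decide +revert +kernel
  · let P : (Matrix (Fin 3) (Fin 3) (ZMod 2))ˣ :=
      ⟨!![0, 0, 1; 1, 1, 0; 0, 1, 0], !![0, 1, 1; 0, 0, 1; 1, 0, 0], by decide, by decide⟩
    refine .of_forall_conj_mem P hfin' ?_
    rintro _ ⟨a, b, c, rfl⟩
    convert V.add_mem (V.add_mem (V.smul_mem a hA) (V.smul_mem c hE)) (V.smul_mem b hB) using 1
    clear hA hB hE hfin hfin'
    decide +revert +kernel

theorem TrivialSpectrum.mem_or_mem_of_mem_mem (hV : TrivialSpectrum V)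
    (hfin : 2 < Module.finrank (ZMod 2) V) (hE : !![0, 1, 0; 0, 0, 0; 0, 0, 0] ∈ V) {r : ZMod 2}
    (hA : !![1, 0, 1; 1, r, 0; 0, 1, 1] ∈ V) :
    !![0, 0, 0; 0, 0, 1; 0, 0, 0] ∈ V ∨ !![0, 0, 0; 0, 0, 0; 1, 1 + r, 0] ∈ V := by
  obtain ⟨B, hB, hB0, hBker⟩ := exists_mem_ne_zero_of_finrank_lt (V := V)
    ((entryLinearMap (ZMod 2) (ZMod 2) 1 0).prod (entryLinearMap (ZMod 2) (ZMod 2) 0 1))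
    (by simpa using hfin)
  obtain ⟨h10, h01⟩ : B 1 0 = 0 ∧ B 0 1 = 0 := Prod.mk_eq_zero.1 hBker
  have hdet (a n : ZMod 2) := trivialSpectrum_iff_det.1 hV _
    (V.add_mem (V.add_mem hB (V.smul_mem a hA)) (V.smul_mem n hE))
  rw [B.eta_fin_three, h10, h01] at hB hB0 hdet
  generalize B 0 0 = p, B 0 2 = q, B 1 1 = u, B 1 2 = g, B 2 0 = d, B 2 1 = s, B 2 2 = t at *
  obtain h | h : !![p, 0, q; 0, u, g; d, s, t] = !![0, 0, 0; 0, 0, 1; 0, 0, 0] ∨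
      !![p, 0, q; 0, u, g; d, s, t] = !![0, 0, 0; 0, 0, 0; 1, 1 + r, 0] := by
    clear hA hB hE hV hfin hBker h10 h01 B
    decide +revert +kernel
  · exact .inl (h ▸ hB)
  · exact .inr (h ▸ hB)

theorem matSimilar_spaceT2_or_spaceT3_of_not_rankOneFree (hV : TrivialSpectrum V)
    (hirr : IrredMatSpace V) (hfin : Module.finrank (ZMod 2) V = 3) (hrank : ¬ RankOneFree V) :
    MatSimilar V SpaceT2 ∨ MatSimilar V SpaceT3 := by
  obtain ⟨W, hVW, hEW⟩ := hV.exists_matSimilar_elementary_mem hrank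
  obtain ⟨U, hWU, hE, r, hA⟩ :=
    (hV.of_matSimilar hVW).exists_matSimilar_mem_mem (hirr.of_matSimilar hVW) hEW
  have hVU := hVW.trans hWU
  have hfinU := hVU.finrank_eq.trans hfin
  have hB := (hV.of_matSimilar hVU).mem_or_mem_of_mem_mem (by lia) hE hA
  obtain rfl | rfl := eq_zero_or_eq_one r
  · exact .inr (hVU.trans (matSimilar_spaceT3_of_mem hfinU hE hA hB))
  · exact .inl (hVU.trans (matSimilar_spaceT2_of_mem hfinU hE hA hB))

end RankOne

section RankOneFree

variable {V : Submodule (ZMod 2) (Matrix (Fin 3) (Fin 3) (ZMod 2))}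

/-- Modulo `x`, evaluation at `x` takes values in a space of dimension less than `n`. -/
theorem TrivialSpectrum.exists_mem_mulVec_eq_zero {n : ℕ}
    {V : Submodule (ZMod 2) (Matrix (Fin n) (Fin n) (ZMod 2))} (hV : TrivialSpectrum V)
    (hfin : n ≤ Module.finrank (ZMod 2) V) {x : Fin n → ZMod 2} (hx : x ≠ 0) :
    ∃ M ∈ V, M ≠ 0 ∧ M *ᵥ x = 0 := by
  let F := Submodule.span (ZMod 2) {x}
  have hlt : Module.finrank (ZMod 2) ((Fin n → ZMod 2) ⧸ F) < Module.finrank (ZMod 2) V := by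
    have hF : Module.finrank (ZMod 2) F = 1 := finrank_span_singleton hx
    have := F.finrank_quotient_add_finrank
    rw [Module.finrank_fin_fun, hF] at this
    lia
  obtain ⟨M, hM, hM0, hMx⟩ := exists_mem_ne_zero_of_finrank_lt
    (F.mkQ ∘ₗ (mulVecBilin (ZMod 2) (ZMod 2)).flip x) hlt
  obtain ⟨c, hc⟩ := Submodule.mem_span_singleton.1 ((Submodule.Quotient.mk_eq_zero F).1 hMx)
  replace hc : M *ᵥ x = c • x := hc.symm
  refine ⟨M, hM, hM0, ?_⟩
  by_cases hc0 : c = 0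
  · rw [hc, hc0, zero_smul]
  · exact absurd hc (hV M hM c x hc0 hx)

/-- Choosing for each nonzero vector a nonzero matrix that kills it is injective, because kernels
are at most one-dimensional; then it is surjective as well, by counting. -/
theorem RankOneFree.exists_bijective_mulVec_eq_zero (hrank : RankOneFree V)
    (hV : TrivialSpectrum V) (hfin : Module.finrank (ZMod 2) V = 3) :
    ∃ κ : (Fin 3 → ZMod 2) → V, Function.Bijective κ ∧ κ 0 = 0 ∧
      ∀ x, (κ x : Matrix (Fin 3) (Fin 3) (ZMod 2)) *ᵥ x = 0 := by
  have hex (x : Fin 3 → ZMod 2) :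
      ∃ M : V, (M : Matrix (Fin 3) (Fin 3) (ZMod 2)) *ᵥ x = 0 ∧ (M = 0 ↔ x = 0) := by
    by_cases hx : x = 0
    · exact ⟨0, by simp [hx]⟩
    · obtain ⟨M, hM, hM0, hMx⟩ := hV.exists_mem_mulVec_eq_zero hfin.ge hx
      exact ⟨⟨M, hM⟩, hMx, by simpa [hx] using hM0⟩
  choose κ hκ hκ0 using hex
  have hinj : Function.Injective κ := by
    intro x y hxy
    by_cases hx : x = 0
    · rw [hx, eq_comm, ← hκ0, ← hxy, hκ0, hx]
    · have hκx : κ x ≠ 0 := (hκ0 x).not.2 hx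
      have hy : y ≠ 0 := (hκ0 y).not.1 (hxy ▸ hκx)
      exact hrank.vector_eq_of_mulVec_eq_zero (κ x).2 (by simpa using hκx) hx hy (hκ x) (hxy ▸ hκ y)
  refine ⟨κ, hinj.bijective_of_nat_card_le ?_, (hκ0 0).2 rfl, hκ⟩
  simp [Module.natCard_eq_pow_finrank (K := ZMod 2), hfin]

theorem RankOneFree.exists_mulVec_eq_zero (hrank : RankOneFree V) (hV : TrivialSpectrum V)
    (hfin : Module.finrank (ZMod 2) V = 3) {M : Matrix (Fin 3) (Fin 3) (ZMod 2)} (hM : M ∈ V) :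
    ∃ x ≠ 0, M *ᵥ x = 0 := by
  obtain ⟨κ, hκ, hκ0, hκx⟩ := hrank.exists_bijective_mulVec_eq_zero hV hfin
  by_cases hM0 : M = 0
  · exact ⟨Pi.single 0 1, by simp, by rw [hM0, zero_mulVec]⟩
  · obtain ⟨x, hx⟩ := hκ.surjective ⟨M, hM⟩
    refine ⟨x, ?_, by simpa [hx] using hκx x⟩
    rintro rfl
    exact hM0 (congrArg Subtype.val (hx.symm.trans hκ0))

theorem RankOneFree.matrix_eq_of_mulVec_eq_zero (hrank : RankOneFree V) (hV : TrivialSpectrum V)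
    (hfin : Module.finrank (ZMod 2) V = 3) {M N : Matrix (Fin 3) (Fin 3) (ZMod 2)} (hM : M ∈ V)
    (hN : N ∈ V) (hM0 : M ≠ 0) (hN0 : N ≠ 0) {x : Fin 3 → ZMod 2} (hx : x ≠ 0)
    (hMx : M *ᵥ x = 0) (hNx : N *ᵥ x = 0) : M = N := by
  obtain ⟨κ, hκ, hκ0, hκx⟩ := hrank.exists_bijective_mulVec_eq_zero hV hfin
  have eq_κ {L : Matrix (Fin 3) (Fin 3) (ZMod 2)} (hL : L ∈ V) (hL0 : L ≠ 0)
      (hLx : L *ᵥ x = 0) : L = κ x := by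
    obtain ⟨u, hu⟩ := hκ.surjective ⟨L, hL⟩
    have hLu : L *ᵥ u = 0 := by simpa [hu] using hκx u
    have hu0 : u ≠ 0 := by
      rintro rfl
      exact hL0 (congrArg Subtype.val (hu.symm.trans hκ0))
    rw [← hrank.vector_eq_of_mulVec_eq_zero hL hL0 hu0 hx hLu hLx, hu]
  rw [eq_κ hM hM0 hMx, eq_κ hN hN0 hNx]

theorem RankOneFree.det_eq_zero (hrank : RankOneFree V) (hV : TrivialSpectrum V)
    (hfin : Module.finrank (ZMod 2) V = 3) {M : Matrix (Fin 3) (Fin 3) (ZMod 2)} (hM : M ∈ V) :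
    M.det = 0 :=
  exists_mulVec_eq_zero_iff.1 (hrank.exists_mulVec_eq_zero hV hfin hM)

theorem RankOneFree.col_ne_zero (hrank : RankOneFree V) {M : Matrix (Fin 3) (Fin 3) (ZMod 2)}
    (hM : M ∈ V) (hM0 : M ≠ 0) {i j : Fin 3} (hij : i ≠ j) (hi : M.col i = 0) : M.col j ≠ 0 := by
  intro hj
  have := hrank.vector_eq_of_mulVec_eq_zero hM hM0 (x := Pi.single i 1) (y := Pi.single j 1)
    (by simp) (by simp) (by rwa [mulVec_single_one]) (by rwa [mulVec_single_one])
  simpa [hij] using congrFun this i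

theorem RankOneFree.col_ne_col (hrank : RankOneFree V) {M : Matrix (Fin 3) (Fin 3) (ZMod 2)}
    (hM : M ∈ V) (hM0 : M ≠ 0) {i j k : Fin 3} (hij : i ≠ j) (hik : i ≠ k) (hjk : j ≠ k)
    (hi : M.col i = 0) : M.col j ≠ M.col k := by
  intro hcol
  have := hrank.vector_eq_of_mulVec_eq_zero hM hM0 (x := Pi.single i 1)
    (y := Pi.single j 1 + Pi.single k 1) (by simp) ?_ (by rwa [mulVec_single_one])
    (by rw [mulVec_add, mulVec_single_one, mulVec_single_one, hcol, ZModModule.add_self])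
  · simpa [hij, hik] using congrFun this i
  · intro h
    simpa [hjk] using congrFun h j

theorem RankOneFree.notMem_of_mem (hrank : RankOneFree V) (hV : TrivialSpectrum V)
    (hfin : Module.finrank (ZMod 2) V = 3) (hJ : !![0, 0, 1; 0, 0, 0; 0, 1, 0] ∈ V) :
    !![0, 0, 0; 0, 0, 1; 1, 0, 0] ∉ V := by
  intro hK
  obtain ⟨M, hM, hM0, hM2⟩ :=
    hV.exists_mem_mulVec_eq_zero hfin.ge (x := Pi.single 2 1) (by simp)
  rw [mulVec_single_one] at hM2
  have hmem (a b : ZMod 2) := V.add_mem (V.add_mem hM (V.smul_mem a hJ)) (V.smul_mem b hK)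
  have hdet (a b : ZMod 2) := hrank.det_eq_zero hV hfin (hmem a b)
  have hdet_one (a b : ZMod 2) := trivialSpectrum_iff_det.1 hV _ (hmem a b)
  rw [eq_of_col_eq rfl rfl hM2] at hM0 hdet hdet_one
  simp only [col_apply, Pi.zero_apply] at hM0 hdet hdet_one
  generalize M 0 0 = p, M 0 1 = q, M 1 0 = r, M 1 1 = s, M 2 0 = t, M 2 1 = u at *
  refine hM0 ?_
  clear hM hM2 hmem hJ hK hfin hV hrank hM0
  decide +revert +kernel

theorem RankOneFree.eq_of_col_eq_single (hrank : RankOneFree V) (hV : TrivialSpectrum V)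
    {J K : Matrix (Fin 3) (Fin 3) (ZMod 2)} (hJ : J ∈ V) (hK : K ∈ V) (hJ0 : J ≠ 0) (hK0 : K ≠ 0)
    (hJtr : J.trace = 0) (hKtr : K.trace = 0) (hJcol : J.col 0 = 0) (hKcol : K.col 1 = 0)
    (hJe : J.col 1 = Pi.single 2 1) (hKe : K.col 0 = Pi.single 2 1) :
    J = !![0, 0, 1; 0, 0, 0; 0, 1, 0] ∧ K = !![0, 0, 0; 0, 0, 1; 1, 0, 0] := by
  have hJ2 : J.col 2 ≠ 0 := hrank.col_ne_zero hJ hJ0 (by decide) hJcol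
  have hK2 : K.col 2 ≠ 0 := hrank.col_ne_zero hK hK0 (by decide) hKcol
  have hJdet := trivialSpectrum_iff_det.1 hV J hJ
  have hKdet := trivialSpectrum_iff_det.1 hV K hK
  rw [eq_of_col_eq hJcol hJe rfl] at hJtr hJdet ⊢
  rw [eq_of_col_eq hKe hKcol rfl] at hKtr hKdet ⊢
  generalize J.col 2 = u, K.col 2 = v at *
  constructor
  · clear * - hJ2 hJtr hJdet
    decide +revert +kernel
  · clear * - hK2 hKtr hKdet
    decide +revert +kernel

/-- In the basis `(x, y, J y)` the two matrices would be those of `RankOneFree.notMem_of_mem`. -/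
theorem RankOneFree.add_mulVec_add_ne_zero (hrank : RankOneFree V) (hV : TrivialSpectrum V)
    (hfin : Module.finrank (ZMod 2) V = 3) {J K : Matrix (Fin 3) (Fin 3) (ZMod 2)} (hJ : J ∈ V)
    (hK : K ∈ V) (hJ0 : J ≠ 0) (hK0 : K ≠ 0) (hJtr : J.trace = 0) (hKtr : K.trace = 0)
    {x y : Fin 3 → ZMod 2} (hx : x ≠ 0) (hy : y ≠ 0) (hxy : x ≠ y) (hJx : J *ᵥ x = 0)
    (hKy : K *ᵥ y = 0) : (J + K) *ᵥ (x + y) ≠ 0 := by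
  intro hJK
  have hKx : K *ᵥ x = J *ᵥ y := by
    rw [add_mulVec, mulVec_add, mulVec_add, hJx, hKy, zero_add, add_zero] at hJK
    rw [← sub_eq_zero, ZModModule.sub_eq_add, add_comm, hJK]
  have hb : LinearIndependent (ZMod 2) ![x, y, J *ᵥ y] := by
    refine linearIndependent_of_add_ne hx hy hxy (fun h => ?_) (hKx ▸ hV.mulVec_ne_self hK hx)
      (hV.mulVec_ne_self hJ hy) ?_
    · exact hxy (hrank.vector_eq_of_mulVec_eq_zero hJ hJ0 hx hy hJx h)
    · have := hV.mulVec_ne_self hJ (x := x + y) (fun h => hxy ?_)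
      · rwa [mulVec_add, hJx, zero_add] at this
      · rwa [← ZModModule.sub_eq_add, sub_eq_zero] at h
  obtain ⟨P, hP⟩ := exists_units_mulVec_eq_single hb
  have hVW := matSimilar_conjSpace P V
  have hJP := conj_mem_conjSpace P hJ
  have hKP := conj_mem_conjSpace P hK
  have hJ_col0 : (P.val * J * P⁻¹.val).col 0 = 0 := by
    rw [col_conj_of_mulVec_eq_single (hP 0), cons_val_zero, hJx, mulVec_zero]
  have hJ_col1 : (P.val * J * P⁻¹.val).col 1 = Pi.single 2 1 := by
    rw [col_conj_of_mulVec_eq_single (hP 1)]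
    exact hP 2
  have hK_col0 : (P.val * K * P⁻¹.val).col 0 = Pi.single 2 1 := by
    rw [col_conj_of_mulVec_eq_single (hP 0), cons_val_zero, hKx]
    exact hP 2
  have hK_col1 : (P.val * K * P⁻¹.val).col 1 = 0 := by
    rw [col_conj_of_mulVec_eq_single (hP 1), cons_val_one, cons_val_zero, hKy, mulVec_zero]
  obtain ⟨hJ_eq, hK_eq⟩ := (hrank.of_matSimilar hVW).eq_of_col_eq_single
    (hV.of_matSimilar hVW) hJP hKP (units_conj_ne_zero P hJ0) (units_conj_ne_zero P hK0)
    ((trace_units_conj P J).trans hJtr) ((trace_units_conj P K).trans hKtr)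
    hJ_col0 hK_col1 hJ_col1 hK_col0
  exact (hrank.of_matSimilar hVW).notMem_of_mem (hV.of_matSimilar hVW)
    (hVW.finrank_eq.trans hfin) (hJ_eq ▸ hJP) (hK_eq ▸ hKP)

theorem matSimilar_spaceT1_of_mem (hrank : RankOneFree V) (hV : TrivialSpectrum V)
    (hfin : Module.finrank (ZMod 2) V = 3) (hJ : !![0, 1, 0; 0, 0, 0; 1, 0, 0] ∈ V)
    (hK : !![0, 0, 0; 0, 0, 1; 1, 0, 0] ∈ V) : MatSimilar V SpaceT1 := by
  obtain ⟨M, hM, hM0, hMker⟩ := exists_mem_ne_zero_of_finrank_lt (V := V)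
    ((entryLinearMap (ZMod 2) (ZMod 2) 0 1).prod (entryLinearMap (ZMod 2) (ZMod 2) 1 2))
    (by simp [hfin])
  obtain ⟨h01, h12⟩ : M 0 1 = 0 ∧ M 1 2 = 0 := Prod.mk_eq_zero.1 hMker
  have hmem (a b : ZMod 2) := V.add_mem (V.add_mem hM (V.smul_mem a hJ)) (V.smul_mem b hK)
  have hdet (a b : ZMod 2) := hrank.det_eq_zero hV hfin (hmem a b)
  have hdet_one (a b : ZMod 2) := trivialSpectrum_iff_det.1 hV _ (hmem a b)
  have hA : !![1, 0, 1; 1, 1, 0; 0, 1, 1] ∈ V := by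
    suffices M = !![1, 0, 1; 1, 1, 0; 0, 1, 1] from this ▸ hM
    rw [M.eta_fin_three, h01, h12] at hM0 hdet hdet_one ⊢
    generalize M 0 0 = p, M 0 2 = q, M 1 0 = r, M 1 1 = s, M 2 0 = t, M 2 1 = u, M 2 2 = v at *
    clear hM hMker hmem hJ hK hfin hV hrank h01 h12
    decide +revert +kernel
  refine .of_forall_conj_mem 1 (hfin.trans finrank_spaceT1.symm) ?_
  rintro _ ⟨a, b, c, rfl⟩
  convert V.add_mem (V.add_mem (V.smul_mem a hA) (V.smul_mem b hJ)) (V.smul_mem c hK) using 1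
  clear hM hMker hmem hJ hK hfin hV hrank h01 h12 hdet hdet_one hA hM0
  decide +revert +kernel

theorem matSimilar_spaceT1_of_col_eq (hrank : RankOneFree V) (hV : TrivialSpectrum V)
    (hfin : Module.finrank (ZMod 2) V = 3) {J K : Matrix (Fin 3) (Fin 3) (ZMod 2)} (hJ : J ∈ V)
    (hK : K ∈ V) (hJ0 : J ≠ 0) (hK0 : K ≠ 0) (hJtr : J.trace = 0) (hKtr : K.trace = 0)
    (hJcol : J.col 0 = 0) (hKcol : K.col 1 = 0) (hJKcol : K.col 2 = J.col 2) :
    MatSimilar V SpaceT1 := by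
  have hv : J.col 1 ≠ 0 := hrank.col_ne_zero hJ hJ0 (by decide) hJcol
  have hu : K.col 0 ≠ 0 := hrank.col_ne_zero hK hK0 (by decide) hKcol
  have hw : J.col 2 ≠ 0 := hrank.col_ne_zero hJ hJ0 (by decide) hJcol
  have hvw : J.col 1 ≠ J.col 2 :=
    hrank.col_ne_col hJ hJ0 (by decide) (by decide) (by decide) hJcol
  have hJK := V.add_mem hJ hK
  have hdetJ := trivialSpectrum_iff_det.1 hV _ hJ
  have hdetK := trivialSpectrum_iff_det.1 hV _ hK
  have hdetJK := trivialSpectrum_iff_det.1 hV _ hJK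
  rw [eq_of_col_eq hJcol rfl rfl] at hJ hJK hdetJ hdetJK hJtr
  rw [eq_of_col_eq rfl hKcol hJKcol] at hK hJK hdetK hdetJK hKtr
  generalize J.col 1 = v, K.col 0 = u, J.col 2 = w at *
  obtain ⟨rfl, rfl, rfl⟩ | ⟨rfl, rfl, rfl⟩ :
      u = ![0, 0, 1] ∧ v = ![1, 0, 0] ∧ w = ![0, 1, 0] ∨
      u = ![0, 1, 0] ∧ v = ![0, 0, 1] ∧ w = ![1, 0, 0] := by
    clear hJ hK hJK hfin hV hrank hJ0 hK0 hJcol hKcol hJKcol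
    set_option synthInstance.maxSize 512 in
    decide +revert +kernel
  · refine matSimilar_spaceT1_of_mem hrank hV hfin ?_ hK
    convert hJK using 1
    decide +kernel
  · let P : (Matrix (Fin 3) (Fin 3) (ZMod 2))ˣ :=
      ⟨!![0, 1, 0; 1, 0, 0; 0, 0, 1], !![0, 1, 0; 1, 0, 0; 0, 0, 1], by decide, by decide⟩
    have hP := matSimilar_conjSpace P V
    refine hP.trans (matSimilar_spaceT1_of_mem (hrank.of_matSimilar hP) (hV.of_matSimilar hP)
      (hP.finrank_eq.trans hfin) ?_ ?_)
    · convert conj_mem_conjSpace P hJK using 1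
      decide +kernel
    · convert conj_mem_conjSpace P hJ using 1
      decide +kernel

theorem matSimilar_spaceT1_of_rankOneFree (hV : TrivialSpectrum V)
    (hfin : Module.finrank (ZMod 2) V = 3) (hrank : RankOneFree V) : MatSimilar V SpaceT1 := by
  obtain ⟨J, hJ, K, hK, hJ0, hK0, hJK, hJtr, hKtr⟩ :=
    exists_mem_mem_trace_eq_zero (V := V) (by lia)
  have hJK0 : J + K ≠ 0 := by rwa [← ZModModule.sub_eq_add, Ne, sub_eq_zero]
  have hJKV := V.add_mem hJ hK
  obtain ⟨x, hx, hJx⟩ := hrank.exists_mulVec_eq_zero hV hfin hJ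
  obtain ⟨y, hy, hKy⟩ := hrank.exists_mulVec_eq_zero hV hfin hK
  obtain ⟨z, hz, hJKz⟩ := hrank.exists_mulVec_eq_zero hV hfin hJKV
  have hxy : x ≠ y := by
    rintro rfl
    exact hJK (hrank.matrix_eq_of_mulVec_eq_zero hV hfin hJ hK hJ0 hK0 hx hJx hKy)
  have hzx : z ≠ x := by
    rintro rfl
    exact hK0 (by
      simpa using hrank.matrix_eq_of_mulVec_eq_zero hV hfin hJ hJKV hJ0 hJK0 hx hJx hJKz)
  have hzy : z ≠ y := by
    rintro rfl
    exact hJ0 (by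
      simpa using hrank.matrix_eq_of_mulVec_eq_zero hV hfin hK hJKV hK0 hJK0 hy hKy hJKz)
  have hzxy : z ≠ x + y := by
    rintro rfl
    exact hrank.add_mulVec_add_ne_zero hV hfin hJ hK hJ0 hK0 hJtr hKtr hx hy hxy hJx hKy hJKz
  obtain ⟨P, hP⟩ := exists_units_mulVec_eq_single
    (linearIndependent_of_add_ne hx hy hxy hz hzx hzy hzxy)
  have hVW := matSimilar_conjSpace P V
  refine hVW.trans (matSimilar_spaceT1_of_col_eq (hrank.of_matSimilar hVW) (hV.of_matSimilar hVW)
    (hVW.finrank_eq.trans hfin) (conj_mem_conjSpace P hJ) (conj_mem_conjSpace P hK)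
    (units_conj_ne_zero P hJ0) (units_conj_ne_zero P hK0) ((trace_units_conj P J).trans hJtr)
    ((trace_units_conj P K).trans hKtr) ?_ ?_ ?_)
  · rw [col_conj_of_mulVec_eq_single (hP 0), cons_val_zero, hJx, mulVec_zero]
  · rw [col_conj_of_mulVec_eq_single (hP 1), cons_val_one, cons_val_zero, hKy, mulVec_zero]
  · rw [col_conj_of_mulVec_eq_single (hP 2), col_conj_of_mulVec_eq_single (hP 2)]
    rw [add_mulVec, add_comm, ← ZModModule.sub_eq_add, sub_eq_zero] at hJKz
    exact congrArg (P.val *ᵥ ·) hJKz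

end RankOneFree

theorem classification_of_irreducible_trivial_spectrum_spaces :
    (TrivialSpectrum SpaceT1 ∧ IrredMatSpace SpaceT1 ∧
      Module.finrank (ZMod 2) SpaceT1 = 3) ∧
    (TrivialSpectrum SpaceT2 ∧ IrredMatSpace SpaceT2 ∧
      Module.finrank (ZMod 2) SpaceT2 = 3) ∧
    (TrivialSpectrum SpaceT3 ∧ IrredMatSpace SpaceT3 ∧
      Module.finrank (ZMod 2) SpaceT3 = 3) ∧
    (¬ MatSimilar SpaceT1 SpaceT2 ∧ ¬ MatSimilar SpaceT1 SpaceT3 ∧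
      ¬ MatSimilar SpaceT2 SpaceT3) ∧
    ∀ V : Submodule (ZMod 2) (Matrix (Fin 3) (Fin 3) (ZMod 2)),
      TrivialSpectrum V → IrredMatSpace V → Module.finrank (ZMod 2) V = 3 →
      MatSimilar V SpaceT1 ∨ MatSimilar V SpaceT2 ∨ MatSimilar V SpaceT3 := by
  refine ⟨⟨trivialSpectrum_spaceT1, irredMatSpace_spaceT1, finrank_spaceT1⟩,
    ⟨trivialSpectrum_spaceT2, irredMatSpace_spaceT2, finrank_spaceT2⟩,
    ⟨trivialSpectrum_spaceT3, irredMatSpace_spaceT3, finrank_spaceT3⟩,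
    ⟨not_matSimilar_spaceT1_spaceT2, not_matSimilar_spaceT1_spaceT3,
      not_matSimilar_spaceT2_spaceT3⟩, fun V hV hirr hfin => ?_⟩
  by_cases hrank : RankOneFree V
  · exact .inl (matSimilar_spaceT1_of_rankOneFree hV hfin hrank)
  · exact .inr (matSimilar_spaceT2_or_spaceT3_of_not_rankOneFree hV hirr hfin hrank)
end
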